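/- arXiv:2104.05455 — 7 statements merged into one kernel-verified Lean document; each statement's English description precedes it below -/
import Mathlib

section
/- Let K be a Hilbertian field of characteristic 0, l ≥ 1, and P_1(Y),…,P_l(Y) ∈ K[Y] polynomials such that p = ⟨P_1,…,P_l⟩ is a prime ideal of K[Y] with d := Krull dimension of K[Y]/p > 0. Fix an integer D ≥ 1 and let Q_D(Λ,Y) be the generic polynomial of degree D, with N_D parameter variables. Then the set of λ ∈ K^{N_D} such that the ideal ⟨P_1,…,P_l, Q_D(λ,Y)⟩ of K[Y] is prime and K[Y] modulo this ideal has Krull dimension d − 1 is Zariski-dense in K^{N_D}. -/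
open MvPolynomial

noncomputable section

/-- The rational function field `K(T)` with variables indexed by `ι`,
realized as the fraction field of the polynomial ring. -/
abbrev RatFuncField (K : Type) [Field K] (ι : Type) : Type := FractionRing (MvPolynomial ι K)

/-- `x ∈ K(T)` can be specialized at `t ∈ K^ι` with value `v`:
there is a representation `x = a/b` with `b(t) ≠ 0` and `v = a(t)/b(t)`. -/
def RatSpecializesTo (K : Type) [Field K] {ι : Type} (t : ι → K)
    (x : RatFuncField K ι) (v : K) : Prop :=
  ∃ a b : MvPolynomial ι K, MvPolynomial.eval t b ≠ 0 ∧
    algebraMap (MvPolynomial ι K) (RatFuncField K ι) b * x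
      = algebraMap (MvPolynomial ι K) (RatFuncField K ι) a ∧
    MvPolynomial.eval t b * v = MvPolynomial.eval t a

/-- `P ∈ K(T)[Y]` specializes at `t` (coefficientwise) to `q ∈ K[Y]`. -/
def PolySpecializesTo (K : Type) [Field K] {ι : Type} {s : ℕ} (t : ι → K)
    (P : MvPolynomial (Fin s) (RatFuncField K ι)) (q : MvPolynomial (Fin s) K) : Prop :=
  ∀ mono : Fin s →₀ ℕ, RatSpecializesTo K t (P.coeff mono) (q.coeff mono)

/-- `H` is a Hilbert subset of `K^ι`: the set of points where finitely many irreducible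
polynomials of `K(T)[Y]` specialize to irreducible polynomials of `K[Y]`, intersected
with a nonempty Zariski-open subset. -/
def IsHilbertSubset (K : Type) [Field K] (ι : Type) (H : Set (ι → K)) : Prop :=
  ∃ (s l n : ℕ) (p : Fin l → MvPolynomial (Fin s) (RatFuncField K ι))
    (g : Fin n → MvPolynomial ι K),
    (∀ i, Irreducible (p i)) ∧
    (∃ t : ι → K, ∃ j, MvPolynomial.eval t (g j) ≠ 0) ∧
    H = {t | (∃ j, MvPolynomial.eval t (g j) ≠ 0) ∧
      ∀ i, ∃ q : MvPolynomial (Fin s) K, PolySpecializesTo K t (p i) q ∧ Irreducible q}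

/-- A subset of `K^ι` is Zariski-dense iff for every nonzero polynomial `g` it contains a
point where `g` does not vanish. -/
def IsZariskiDense (K : Type) [Field K] {ι : Type} (S : Set (ι → K)) : Prop :=
  ∀ g : MvPolynomial ι K, g ≠ 0 → ∃ t ∈ S, MvPolynomial.eval t g ≠ 0

/-- A field is Hilbertian if all its Hilbert subsets (of all `K^r`, `r ≥ 1`) are
Zariski-dense. -/
def IsHilbertianField (K : Type) [Field K] : Prop :=
  ∀ r : ℕ, 0 < r → ∀ H : Set (Fin r → K), IsHilbertSubset K (Fin r) H → IsZariskiDense K H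

/-- The canonical ring homomorphism `K[T,Y] → K(T)[Y]`. -/
def extHom (K : Type) [Field K] (r s : ℕ) :
    MvPolynomial (Fin r ⊕ Fin s) K →+* MvPolynomial (Fin s) (RatFuncField K (Fin r)) :=
  MvPolynomial.eval₂Hom
    ((MvPolynomial.C).comp
      ((algebraMap (MvPolynomial (Fin r) K) (RatFuncField K (Fin r))).comp MvPolynomial.C))
    (Sum.elim
      (fun i => MvPolynomial.C
        (algebraMap (MvPolynomial (Fin r) K) (RatFuncField K (Fin r)) (MvPolynomial.X i)))
      (fun j => MvPolynomial.X j))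

/-- The specialization homomorphism `K[T,Y] → K[Y]`, `T ↦ t`. -/
def specHom (K : Type) [Field K] {r s : ℕ} (t : Fin r → K) :
    MvPolynomial (Fin r ⊕ Fin s) K →+* MvPolynomial (Fin s) K :=
  MvPolynomial.eval₂Hom MvPolynomial.C
    (Sum.elim (fun i => MvPolynomial.C (t i)) (fun j => MvPolynomial.X j))

/-- `L` is a separable extension of `F` in the general sense (equivalently, `L` is
linearly disjoint from the perfect closure of `F`, equivalently `L ⊗_F F̄` is reduced);
the extension is given by the ring homomorphism `f : F → L`. -/
def IsSepExtOfHom (F L : Type) [Field F] [CommRing L] (f : F →+* L) : Prop :=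
  letI : Algebra F L := f.toAlgebra
  IsReduced (TensorProduct F (AlgebraicClosure F) L)

/-- `Frac(A)` is a separable extension of `F` in the general sense. -/
def IsSepOverBase (F : Type) [Field F] (A : Type) [CommRing A] [Algebra F A] : Prop :=
  IsSepExtOfHom F (FractionRing A) ((algebraMap A (FractionRing A)).comp (algebraMap F A))

/-- The height of an ideal: the infimum over primes containing it of the lengths of
chains of primes below.  For a prime ideal this is the usual height. -/
def idealHeight {R : Type} [CommRing R] (I : Ideal R) : ℕ∞ :=
  ⨅ p : {q : PrimeSpectrum R // I ≤ q.asIdeal}, Order.height p.1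

/-- The monomials in `s` variables of total degree at most `D`. -/
def MonLE (s D : ℕ) : Type := {m : Fin s →₀ ℕ // m.degree ≤ D}

noncomputable instance (s D : ℕ) : Fintype (MonLE s D) :=
  (Finsupp.finite_of_degree_le D).fintype

/-- The generic polynomial of degree `D`, with parameter variables `v m`, `m` a monomial of
degree at most `D`, as an element of `K[Λ][Y]`. -/
def genPoly (K : Type) [Field K] (s D : ℕ) {Λ : Type} (v : MonLE s D → Λ) :
    MvPolynomial (Fin s) (MvPolynomial Λ K) :=
  ∑ m : MonLE s D, MvPolynomial.monomial m.1 (MvPolynomial.X (v m))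

/-- The generic polynomial of degree `D` specialized at `lam ∈ K^{N_D}`. -/
def genPolyAt (K : Type) [Field K] (s D : ℕ) (lam : MonLE s D → K) :
    MvPolynomial (Fin s) K :=
  ∑ m : MonLE s D, MvPolynomial.monomial m.1 (lam m)

/-- Substitution `T_i ↦ U_i(Y)` as a ring homomorphism `K[T,Y] → K[Y]`. -/
def polySubstHom (K : Type) [Field K] {r s : ℕ} (U : Fin r → MvPolynomial (Fin s) K) :
    MvPolynomial (Fin r ⊕ Fin s) K →+* MvPolynomial (Fin s) K :=
  MvPolynomial.eval₂Hom MvPolynomial.C (Sum.elim U (fun j => MvPolynomial.X j))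

/-- The quasi-generic polynomial `Q_{S,R}(Λ,Y) = ∑_i Λ_i Q_i(Y) + R(Y)` of base `(S,R)`,
where `S = {monomial (m 0), …, monomial (m n)}`, as an element of `K[Λ][Y]`. -/
def quasiGen (K : Type) [Field K] {s n : ℕ} (m : Fin (n + 1) → (Fin s →₀ ℕ))
    (R : MvPolynomial (Fin s) K) :
    MvPolynomial (Fin s) (MvPolynomial (Fin (n + 1)) K) :=
  (∑ i, MvPolynomial.monomial (m i) (MvPolynomial.X i)) +
    MvPolynomial.map (MvPolynomial.C) R

/-- Hypothesis (H) for the triple `(p, S, R)` (with `S` the set of monomials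
`monomial (m i)`, `m 0 = 0`): the map `φ_{S,R}` sending `(a_1,…,a_n)` to the class mod `E`
of `∑_{i ≥ 1} a_i Q_i(Y) + R(Y)` in `B/E` is not identically zero, where `B = K[Y]/p` and
`E ⊆ B` is the subfield of elements algebraic over `K`. -/
def HypothesisH (K : Type) [Field K] {s n : ℕ} (p : Ideal (MvPolynomial (Fin s) K))
    (m : Fin (n + 1) → (Fin s →₀ ℕ)) (R : MvPolynomial (Fin s) K) : Prop :=
  ∃ a : Fin (n + 1) → K,
    Ideal.Quotient.mk p ((∑ i ∈ Finset.univ.erase 0, MvPolynomial.monomial (m i) (a i)) + R)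
      ∉ integralClosure K (MvPolynomial (Fin s) K ⧸ p)


theorem dim_int (R S : Type) [CommRing R] [CommRing S] [Algebra R S] [Algebra.IsIntegral R S]
    (hinj : Function.Injective (algebraMap R S)) : ringKrullDim S = ringKrullDim R := by
  apply le_antisymm
  · refine Order.krullDim_le_of_strictMono (PrimeSpectrum.comap (algebraMap R S)) ?_
    intro I J h
    exact Ideal.IsIntegral.comap_lt_comap (I := I.asIdeal) (J := J.asIdeal) h
  · refine iSup_le fun l => ?_
    obtain ⟨Q, hb, hQp, hQ⟩ := Ideal.exists_ideal_over_prime_of_isIntegral (S := S) l.head.asIdeal ⊥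
      (by rw [Ideal.comap_bot_of_injective _ hinj]; exact bot_le)
    have : Q.LiesOver l.head.asIdeal := ⟨hQ.symm⟩
    obtain ⟨L, hL, -⟩ := Ideal.exists_ltSeries_of_hasGoingUp l Q
    rw [← hL]
    exact Order.LTSeries.length_le_krullDim L

theorem dim_hyp (K : Type) [Field K] (d : ℕ) (p : MvPolynomial (Fin d) K) (hp : Irreducible p) :
    ringKrullDim (MvPolynomial (Fin d) K ⧸ Ideal.span {p}) = ((d - 1 : ℕ) : WithBot ℕ∞) := by
  have hpp : Prime p := hp.prime
  have hprime : (Ideal.span {p}).IsPrime := (Ideal.span_singleton_prime hp.ne_zero).2 hpp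
  have hvar : ∃ i, 0 < p.degreeOf i := by
    by_contra! h
    have : p.totalDegree = 0 := by
      rw [MvPolynomial.totalDegree_eq_zero_iff]
      intro m hm i
      have := MvPolynomial.monomial_le_degreeOf i hm
      have := h i
      omega
    rw [MvPolynomial.totalDegree_eq_zero_iff_eq_C] at this
    apply hp.not_isUnit
    rw [this]
    refine IsUnit.map _ (IsUnit.mk0 _ ?_)
    intro h0
    rw [h0, map_zero] at this
    exact hp.ne_zero this
  obtain ⟨i, hi⟩ := hvar
  have hdpos : 0 < d := i.pos
  have hub := ringKrullDim_quotient_succ_le_of_nonZeroDivisor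
    (mem_nonZeroDivisors_of_ne_zero hp.ne_zero)
  rw [MvPolynomial.ringKrullDim_of_isNoetherianRing, ringKrullDim_eq_zero_of_field] at hub
  obtain ⟨r, g, hginj, hgint⟩ := exists_integral_inj_algHom_of_fg K
    (MvPolynomial (Fin d) K ⧸ Ideal.span {p})
  let := g.toRingHom.toAlgebra
  have : Algebra.IsIntegral (MvPolynomial (Fin r) K) (MvPolynomial (Fin d) K ⧸ Ideal.span {p}) :=
    ⟨hgint⟩
  have h1 := dim_int (MvPolynomial (Fin r) K) (MvPolynomial (Fin d) K ⧸ Ideal.span {p}) hginj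
  rw [MvPolynomial.ringKrullDim_of_isNoetherianRing, ringKrullDim_eq_zero_of_field] at h1
  simp only [Nat.card_eq_fintype_card, Fintype.card_fin, zero_add] at h1 hub
  rw [h1] at hub ⊢
  have hub' : r + 1 ≤ d := by exact_mod_cast hub
  have hind : AlgebraicIndependent K (fun j : {j : Fin d // j ≠ i} =>
      Ideal.Quotient.mk (Ideal.span {p}) (X j.1)) := by
    rw [algebraicIndependent_iff]
    intro f hf
    by_contra hne
    have e : aeval (fun j : {j : Fin d // j ≠ i} => Ideal.Quotient.mk (Ideal.span {p}) (X j.1)) f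
        = Ideal.Quotient.mk (Ideal.span {p}) (rename Subtype.val f) := by
      have : (aeval (fun j : {j : Fin d // j ≠ i} =>
        Ideal.Quotient.mk (Ideal.span {p}) (X j.1)) : _ →ₐ[K] _)
        = (Ideal.Quotient.mkₐ K (Ideal.span {p})).comp (rename Subtype.val) := by
        ext j; simp
      exact DFunLike.congr_fun this f
    rw [e, Ideal.Quotient.eq_zero_iff_mem, Ideal.mem_span_singleton] at hf
    obtain ⟨k, hk⟩ := hf
    have hne' : rename (R := K) Subtype.val f ≠ 0 := fun h => hne
      (rename_injective _ Subtype.val_injective (by simpa using h))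
    have hk0 : k ≠ 0 := by rintro rfl; simp at hk; exact hne' (by simpa using hk)
    have h2 : degreeOf i (rename (R := K) Subtype.val f) = 0 := by
      rw [← Nat.le_zero, MvPolynomial.degreeOf_le_iff]
      intro m hm
      by_contra hc
      have : i ∈ (rename (R := K) Subtype.val f).vars := (mem_vars_iff_mem_support i).2 ⟨m, hm, by
        simp only [Finsupp.mem_support_iff]; omega⟩
      have := vars_rename Subtype.val f this
      simp at this
    rw [hk, degreeOf_mul_eq hp.ne_zero hk0] at h2
    omega
  have : IsScalarTower K (MvPolynomial (Fin r) K) (MvPolynomial (Fin d) K ⧸ Ideal.span {p}) :=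
    IsScalarTower.of_algebraMap_eq fun x => (g.commutes x).symm
  have : FaithfulSMul (MvPolynomial (Fin r) K) (MvPolynomial (Fin d) K ⧸ Ideal.span {p}) :=
    (faithfulSMul_iff_algebraMap_injective _ _).2 hginj
  have h3 := trdeg_add_eq K (MvPolynomial (Fin r) K) (A := MvPolynomial (Fin d) K ⧸ Ideal.span {p})
  rw [_root_.trdeg_eq_zero (R := MvPolynomial (Fin r) K)
    (A := MvPolynomial (Fin d) K ⧸ Ideal.span {p}), MvPolynomial.trdeg_of_isDomain, add_zero] at h3
  have h4 := hind.cardinalMk_le_trdeg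
  rw [← h3] at h4
  have h5 : d - 1 ≤ r := by
    simpa using h4
  congr 2
  omega

theorem prime_contract (A B E F : Type) [CommRing A] [IsDomain A] [IsIntegrallyClosed A]
    [CommRing B] [IsDomain B] [Field E] [Field F] [Algebra A B] [Algebra A E] [Algebra A F]
    [Algebra B F] [Algebra E F] [IsScalarTower A B F] [IsScalarTower A E F]
    [IsFractionRing A E] [FaithfulSMul B F] [FaithfulSMul A B] [Algebra.IsIntegral A B]
    [FiniteDimensional E F]
    (θ : B) (hθ : Algebra.adjoin E {algebraMap B F θ} = ⊤) (c : A)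
    (hp : Prime ((minpoly A θ).eval c)) (a : A) (b : B)
    (hab : algebraMap A B a = (θ - algebraMap A B c) * b) : (minpoly A θ).eval c ∣ a := by
  set t := algebraMap B F θ with ht
  have hθi : IsIntegral A θ := Algebra.IsIntegral.isIntegral θ
  have hti : IsIntegral A t := hθi.algebraMap
  have hm : minpoly E t = (minpoly A θ).map (algebraMap A E) := by
    have h1 := minpoly.isIntegrallyClosed_eq_field_fractions' E hti
    rw [h1, ht, minpoly.algebraMap_eq (FaithfulSMul.algebraMap_injective B F)]
  set t' := t - algebraMap E F (algebraMap A E c) with ht'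
  have hadj : Algebra.adjoin E {t'} = ⊤ := by
    rw [eq_top_iff, ← hθ, Algebra.adjoin_le_iff, Set.singleton_subset_iff]
    have : t = t' + algebraMap E F (algebraMap A E c) := by rw [ht']; ring
    rw [this]
    exact add_mem (Algebra.self_mem_adjoin_singleton E t') (Subalgebra.algebraMap_mem _ _)
  have hint : IsIntegral E t' := IsIntegral.of_finite E t'
  obtain ⟨k, hn⟩ : ∃ k : ℕ, Algebra.norm E t' = (-1) ^ k * (minpoly E t').coeff 0 := by
    have hn := Algebra.PowerBasis.norm_gen_eq_coeff_zero_minpoly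
      (PowerBasis.ofAdjoinEqTop hint hadj)
    rw [PowerBasis.ofAdjoinEqTop_gen] at hn
    exact ⟨_, hn⟩
  rw [ht', minpoly.sub_algebraMap, hm,
    Polynomial.coeff_zero_eq_eval_zero, Polynomial.eval_comp] at hn
  simp only [Polynomial.eval_add, Polynomial.eval_X, Polynomial.eval_C, zero_add,
    Polynomial.eval_map_apply] at hn
  have hnb : IsIntegral A (Algebra.norm E (algebraMap B F b)) :=
    Algebra.isIntegral_norm E (Algebra.IsIntegral.isIntegral b).algebraMap
  obtain ⟨n, hn'⟩ := IsIntegrallyClosed.isIntegral_iff.1 hnb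
  have h2 := congrArg (fun z => Algebra.norm E (algebraMap B F z)) hab
  simp only [map_mul, map_sub] at h2
  rw [← IsScalarTower.algebraMap_apply A B F, ← IsScalarTower.algebraMap_apply A B F,
    IsScalarTower.algebraMap_apply A E F, IsScalarTower.algebraMap_apply A E F,
    Algebra.norm_algebraMap, ← ht, hn, ← hn'] at h2
  have h3 : a ^ Module.finrank E F = (-1) ^ k *
      (minpoly A θ).eval c * n := by
    apply IsFractionRing.injective A E
    rw [map_pow, h2]; simp
  refine hp.dvd_of_dvd_pow (n := Module.finrank E F) ?_
  rw [h3]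
  exact ⟨(-1) ^ k * n, by ring⟩

theorem dvd_eval (A B : Type) [CommRing A] [CommRing B] [Algebra A B] (θ : B) (c : A)
    (f : Polynomial A) :
    (θ - algebraMap A B c) ∣ Polynomial.aeval θ f - algebraMap A B (f.eval c) := by
  have := Polynomial.sub_dvd_eval_sub θ (algebraMap A B c) (f.map (algebraMap A B))
  rwa [Polynomial.eval_map_algebraMap, Polynomial.eval_map_apply] at this

theorem prime_quot (A B E F : Type) [CommRing A] [IsDomain A] [IsIntegrallyClosed A]
    [CommRing B] [IsDomain B] [Field E] [Field F] [Algebra A B] [Algebra A E] [Algebra A F]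
    [Algebra B F] [Algebra E F] [IsScalarTower A B F] [IsScalarTower A E F]
    [IsFractionRing A E] [FaithfulSMul B F] [FaithfulSMul A B] [Algebra.IsIntegral A B]
    [FiniteDimensional E F]
    (θ : B) (hθ : Algebra.adjoin E {algebraMap B F θ} = ⊤) (c : A)
    (hp : Prime ((minpoly A θ).eval c)) (h : A)
    (hh : ∀ b : B, h • b ∈ Algebra.adjoin A {θ})
    (hreg : ∀ x y : B, algebraMap A B h * x = (θ - algebraMap A B c) * y →
      (θ - algebraMap A B c) ∣ x) :
    (Ideal.span {θ - algebraMap A B c}).IsPrime ∧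
    ringKrullDim (B ⧸ Ideal.span {θ - algebraMap A B c}) =
      ringKrullDim (A ⧸ Ideal.span {(minpoly A θ).eval c}) := by
  set q := θ - algebraMap A B c with hq
  set p := (minpoly A θ).eval c with hpdef
  have hcon : ∀ a : A, q ∣ algebraMap A B a → p ∣ a := fun a ⟨b, hb⟩ =>
    prime_contract A B E F θ hθ c hp a b hb
  have hqp : q ∣ algebraMap A B p := by
    have := dvd_eval A B θ c (minpoly A θ)
    rw [minpoly.aeval, zero_sub, dvd_neg] at this
    exact this
  have hrep : ∀ b : B, ∃ a : A, q ∣ algebraMap A B h * b - algebraMap A B a := by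
    intro b
    have := hh b
    rw [Algebra.adjoin_singleton_eq_range_aeval] at this
    obtain ⟨f, hf⟩ := this
    refine ⟨f.eval c, ?_⟩
    have h2 := dvd_eval A B θ c f
    have hf' : Polynomial.aeval θ f = h • b := hf
    rwa [hf', Algebra.smul_def] at h2
  have key : ∀ b a, q ∣ algebraMap A B h * b - algebraMap A B a → p ∣ a → q ∣ b := by
    intro b a h1 h2
    have h3 : q ∣ algebraMap A B a := hqp.trans (map_dvd _ h2)
    obtain ⟨y, hy⟩ := (dvd_sub_left h3).1 h1
    exact hreg b y hy
  constructor
  · rw [Ideal.isPrime_iff]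
    constructor
    · rw [Ne, Ideal.span_singleton_eq_top]
      intro hu
      exact hp.not_isUnit (isUnit_of_dvd_one (hcon 1 hu.dvd))
    · intro u v huv
      rw [Ideal.mem_span_singleton] at *
      obtain ⟨a, ha⟩ := hrep u
      obtain ⟨a', ha'⟩ := hrep v
      have : q ∣ algebraMap A B (a * a') := by
        have h1 : algebraMap A B (a * a') = algebraMap A B h * algebraMap A B h * (u * v)
          - (algebraMap A B h * u - algebraMap A B a) * (algebraMap A B h * v)
          - algebraMap A B a * (algebraMap A B h * v - algebraMap A B a') := by
          rw [map_mul]; ring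
        rw [h1]
        exact dvd_sub (dvd_sub (huv.mul_left _) (ha.mul_right _)) (ha'.mul_left _)
      rcases hp.dvd_or_dvd (hcon _ this) with h1 | h1
      · exact Or.inl (key u a ha h1)
      · rw [Ideal.mem_span_singleton]; exact Or.inr (key v a' ha' h1)
  · have hle : Ideal.span {p} ≤ (Ideal.span {q}).comap (algebraMap A B) := by
      rw [Ideal.span_le, Set.singleton_subset_iff]
      simpa [Ideal.mem_span_singleton] using hqp
    let : Algebra (A ⧸ Ideal.span {p}) (B ⧸ Ideal.span {q}) :=
      (Ideal.quotientMap _ (algebraMap A B) hle).toAlgebra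
    have : Algebra.IsIntegral (A ⧸ Ideal.span {p}) (B ⧸ Ideal.span {q}) := by
      constructor
      intro x
      obtain ⟨b, rfl⟩ := Ideal.Quotient.mk_surjective x
      obtain ⟨f, hf, hf0⟩ := Algebra.IsIntegral.isIntegral (R := A) b
      refine ⟨f.map (Ideal.Quotient.mk _), hf.map _, ?_⟩
      have e : (algebraMap (A ⧸ Ideal.span {p}) (B ⧸ Ideal.span {q})).comp
        (Ideal.Quotient.mk _) = (Ideal.Quotient.mk (Ideal.span {q})).comp (algebraMap A B) := by
        ext z; rfl
      rw [Polynomial.eval₂_map, e, ← Polynomial.hom_eval₂, hf0, map_zero]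
    refine dim_int _ _ ?_
    refine (injective_iff_map_eq_zero _).2 fun x hx => ?_
    obtain ⟨a, rfl⟩ := Ideal.Quotient.mk_surjective x
    have hx' : Ideal.Quotient.mk (Ideal.span {q}) (algebraMap A B a) = 0 := hx
    rw [Ideal.Quotient.eq_zero_iff_mem, Ideal.mem_span_singleton] at hx' ⊢
    exact hcon a hx'

theorem hilbert_one (K : Type) [Field K] (hK : IsHilbertianField K) (d : ℕ)
    (m : Polynomial (MvPolynomial (Fin d) K)) (hm : Prime m)
    (hnc : ∀ f : Polynomial K, f.map MvPolynomial.C ≠ m) (f : Polynomial K) (hf : f ≠ 0) :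
    ∃ c : K, f.eval c ≠ 0 ∧ Irreducible (m.eval (MvPolynomial.C c)) := by
  classical
  let toR : Polynomial K →+* (MvPolynomial (Fin 1) K) := Polynomial.eval₂RingHom C (X 0)
  let frR : (MvPolynomial (Fin 1) K) →+* Polynomial K := MvPolynomial.eval₂Hom Polynomial.C (fun _ => Polynomial.X)
  let Φ : Polynomial (MvPolynomial (Fin d) K) →+* MvPolynomial (Fin d) (MvPolynomial (Fin 1) K) :=
    Polynomial.eval₂RingHom (MvPolynomial.map C) (C (X 0))
  let Ψ : MvPolynomial (Fin d) (MvPolynomial (Fin 1) K) →+* Polynomial (MvPolynomial (Fin d) K) :=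
    MvPolynomial.eval₂Hom ((Polynomial.mapRingHom C).comp frR) (fun i => Polynomial.C (X i))
  have h1 : Ψ.comp Φ = RingHom.id _ := by
    refine Polynomial.ringHom_ext' ?_ ?_
    · refine MvPolynomial.ringHom_ext' ?_ ?_
      · ext x; simp [Φ, Ψ, frR]
      · intro i; simp [Φ, Ψ, frR]
    · simp [Φ, Ψ, frR]
  have h2 : Φ.comp Ψ = RingHom.id _ := by
    refine MvPolynomial.ringHom_ext' ?_ ?_
    · refine MvPolynomial.ringHom_ext' ?_ ?_
      · ext x; simp [Φ, Ψ, frR]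
      · intro i
        have : i = 0 := Subsingleton.elim _ _
        simp [Φ, Ψ, frR, this]
    · intro i; simp [Φ, Ψ, frR]
  let e : Polynomial (MvPolynomial (Fin d) K) ≃+* MvPolynomial (Fin d) (MvPolynomial (Fin 1) K) :=
    RingEquiv.ofRingHom Φ Ψ h2 h1
  have hM : Prime (Φ m) := (MulEquiv.prime_iff e.toMulEquiv).2 hm
  have hM' : Irreducible (MvPolynomial.map (algebraMap (MvPolynomial (Fin 1) K) (RatFuncField K (Fin 1))) (Φ m)) := by
    let _ : Algebra (MvPolynomial (Fin d) (MvPolynomial (Fin 1) K)) (MvPolynomial (Fin d) (RatFuncField K (Fin 1))) :=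
      MvPolynomial.algebraMvPolynomial
    have hI := IsLocalization.isPrime_of_isPrime_disjoint
      ((nonZeroDivisors (MvPolynomial (Fin 1) K)).map (C (σ := Fin d)))
      (MvPolynomial (Fin d) (RatFuncField K (Fin 1))) (Ideal.span {Φ m})
      ((Ideal.span_singleton_prime hM.ne_zero).2 hM) (by
        rw [Set.disjoint_left]
        rintro _ ⟨r, hr, rfl⟩ hmem
        have hr0 : r ≠ 0 := nonZeroDivisors.ne_zero hr
        rw [SetLike.mem_coe, Ideal.mem_span_singleton] at hmem
        obtain ⟨k, hk⟩ := hmem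
        have hk0 : k ≠ 0 := by
          rintro rfl
          rw [mul_zero] at hk
          exact hr0 (by simpa using hk)
        have ht := congrArg MvPolynomial.totalDegree hk
        change totalDegree (C r) = _ at ht
        rw [totalDegree_C, totalDegree_mul_of_isDomain hM.ne_zero hk0] at ht
        have ht0 : (Φ m).totalDegree = 0 := by omega
        rw [MvPolynomial.totalDegree_eq_zero_iff_eq_C] at ht0
        apply hnc (frR (coeff 0 (Φ m)))
        have h3 : Ψ (Φ m) = m := DFunLike.congr_fun h1 m
        rw [ht0] at h3
        conv_rhs => rw [← h3]
        simp [Ψ])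
    rw [Ideal.map_span, Set.image_singleton] at hI
    have hinj : Function.Injective
      (algebraMap (MvPolynomial (Fin d) (MvPolynomial (Fin 1) K)) (MvPolynomial (Fin d) (RatFuncField K (Fin 1)))) :=
      MvPolynomial.map_injective _ (IsFractionRing.injective (MvPolynomial (Fin 1) K) (RatFuncField K (Fin 1)))
    have hne : algebraMap (MvPolynomial (Fin d) (MvPolynomial (Fin 1) K)) (MvPolynomial (Fin d) (RatFuncField K (Fin 1)))
      (Φ m) ≠ 0 := fun h0 => hM.ne_zero (hinj (by rw [h0, map_zero]))
    exact ((Ideal.span_singleton_prime hne).1 hI).irreducible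
  have hden := hK 1 one_pos _ ⟨d, 1, 1, fun _ =>
    MvPolynomial.map (algebraMap (MvPolynomial (Fin 1) K) (RatFuncField K (Fin 1))) (Φ m), fun _ => 1, fun _ => hM',
    ⟨0, 0, by simp⟩, rfl⟩
  have hfr : frR.comp toR = RingHom.id _ := by
    refine Polynomial.ringHom_ext' ?_ ?_
    · ext x; simp [frR, toR]
    · simp [frR, toR]
  have hf' : toR f ≠ 0 := by
    intro h0
    apply hf
    have := DFunLike.congr_fun hfr f
    rw [RingHom.comp_apply, h0, map_zero] at this
    exact this.symm
  obtain ⟨t, ⟨-, ht⟩, hft⟩ := hden _ hf'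
  obtain ⟨q, hq, hqirr⟩ := ht 0
  refine ⟨t 0, ?_, ?_⟩
  · have : (MvPolynomial.eval t).comp toR = Polynomial.evalRingHom (t 0) := by
      refine Polynomial.ringHom_ext' ?_ ?_
      · ext x; simp [toR]
      · simp [toR]
    have := DFunLike.congr_fun this f
    rw [RingHom.comp_apply] at this
    rw [this] at hft
    exact hft
  · have hq2 : q = MvPolynomial.map (MvPolynomial.eval t) (Φ m) := by
      ext mono
      obtain ⟨a, b, hb, hab, hv⟩ := hq mono
      rw [MvPolynomial.coeff_map, ← map_mul] at hab
      have hab' := IsFractionRing.injective (MvPolynomial (Fin 1) K) (RatFuncField K (Fin 1)) hab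
      rw [← hab', map_mul] at hv
      rw [MvPolynomial.coeff_map]
      exact mul_left_cancel₀ hb hv
    have : (MvPolynomial.map (MvPolynomial.eval t)).comp Φ = Polynomial.evalRingHom (C (t 0)) := by
      refine Polynomial.ringHom_ext' ?_ ?_
      · refine MvPolynomial.ringHom_ext' ?_ ?_
        · ext x; simp [Φ]
        · intro i; simp [Φ]
      · simp [Φ]
    have := DFunLike.congr_fun this m
    rw [RingHom.comp_apply, ← hq2] at this
    rw [this] at hqirr
    exact hqirr

theorem map_genPolyAt (K : Type) [Field K] (s D : ℕ) (B : Type) [CommRing B] [Algebra K B]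
    (y : MvPolynomial (Fin s) K →ₐ[K] B) (lam : MonLE s D → K) :
    y (genPolyAt K s D lam) = ∑ m, algebraMap K B (lam m) * y (MvPolynomial.monomial m.1 1) := by
  rw [genPolyAt, map_sum]
  refine Finset.sum_congr rfl fun m _ => ?_
  have : MvPolynomial.monomial m.1 (lam m) = lam m • MvPolynomial.monomial m.1 (1 : K) := by
    rw [MvPolynomial.smul_monomial, smul_eq_mul, mul_one]
  rw [this, map_smul, Algebra.smul_def]

theorem choose_theta (K B E F : Type) [Field K] [CharZero K] (s D : ℕ) (hD : 1 ≤ D)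
    [CommRing B] [IsDomain B] [Field E] [Field F] [Algebra K B] [Algebra K E] [Algebra K F]
    [Algebra B F] [Algebra E F] [IsScalarTower K B F] [IsScalarTower K E F]
    [IsFractionRing B F] [FiniteDimensional E F]
    (y : MvPolynomial (Fin s) K →ₐ[K] B) (hy : Function.Surjective y)
    (htr : ¬ Algebra.IsIntegral K B)
    (g : MvPolynomial (MonLE s D) K) (hg : g ≠ 0) :
    ∃ lam : MonLE s D → K, MvPolynomial.eval lam g ≠ 0 ∧
      Algebra.adjoin E {algebraMap B F (y (genPolyAt K s D lam))} = ⊤ ∧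
      ¬ IsIntegral K (y (genPolyAt K s D lam)) := by
  classical
  have : CharZero E := charZero_of_injective_algebraMap (algebraMap K E).injective
  let L := AlgebraicClosure E
  let ι : K →+* L := (algebraMap E L).comp (algebraMap K E)
  let mon : Fin s → MonLE s D := fun j => ⟨Finsupp.single j 1, by simpa using hD⟩
  have hmon : ∀ j, MvPolynomial.monomial (mon j).1 (1 : K) = X j := fun j => rfl
  -- linear functional
  obtain ⟨j, hj⟩ : ∃ j, ¬ IsIntegral K (y (X j)) := by
    by_contra! hall
    apply htr
    constructor
    intro b
    obtain ⟨P, rfl⟩ := hy b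
    induction P using MvPolynomial.induction_on with
    | C a =>
      have : y (C a) = algebraMap K B a := y.commutes a
      rw [this]; exact isIntegral_algebraMap
    | add p q hp hq => rw [map_add]; exact hp.add hq
    | mul_X p i hp => rw [map_mul]; exact hp.mul (hall i)
  obtain ⟨f, hf0, hfker⟩ := Submodule.exists_le_ker_of_notMem
    (p := Subalgebra.toSubmodule (integralClosure K B)) (v := y (X j)) hj
  let ℓ : (F →ₐ[E] L) × (F →ₐ[E] L) → MvPolynomial (MonLE s D) L := fun στ =>
    ∑ m : MonLE s D, C (στ.1 (algebraMap B F (y (MvPolynomial.monomial m.1 1))) -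
      στ.2 (algebraMap B F (y (MvPolynomial.monomial m.1 1)))) * X m
  let w : MvPolynomial (MonLE s D) K :=
    ∑ m : MonLE s D, C (f (y (MvPolynomial.monomial m.1 1))) * X m
  let T : Finset ((F →ₐ[E] L) × (F →ₐ[E] L)) := Finset.univ.filter fun στ => στ.1 ≠ στ.2
  let G : MvPolynomial (MonLE s D) L := MvPolynomial.map ι (g * w) * ∏ στ ∈ T, ℓ στ
  have hw : w ≠ 0 := by
    intro h0
    have := congrArg (MvPolynomial.eval (Pi.single (mon j) (1 : K))) h0
    simp only [w, map_sum, map_mul, eval_C, eval_X, map_zero, Pi.single_apply, mul_ite, mul_one,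
      mul_zero, Finset.sum_ite_eq', Finset.mem_univ, if_true, hmon] at this
    exact hf0 this
  have hℓ : ∀ στ ∈ T, ℓ στ ≠ 0 := by
    rintro ⟨σ, τ⟩ hT h0
    have hne : σ ≠ τ := by simpa [T] using hT
    apply hne
    have hX : ∀ i, σ (algebraMap B F (y (X i))) = τ (algebraMap B F (y (X i))) := by
      intro i
      have := congrArg (MvPolynomial.eval (Pi.single (mon i) (1 : L))) h0
      simp only [ℓ, map_sum, map_mul, eval_C, eval_X, map_zero, Pi.single_apply, mul_ite, mul_one,
        mul_zero, Finset.sum_ite_eq', Finset.mem_univ, if_true, hmon] at this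
      exact sub_eq_zero.1 this
    have hB : (σ : F →+* L).comp (algebraMap B F) = (τ : F →+* L).comp (algebraMap B F) := by
      have h1 : ((σ : F →+* L).comp (algebraMap B F)).comp (y : MvPolynomial (Fin s) K →+* B) =
          ((τ : F →+* L).comp (algebraMap B F)).comp (y : MvPolynomial (Fin s) K →+* B) := by
        refine MvPolynomial.ringHom_ext ?_ ?_
        · intro a
          have h2 : y (C a) = algebraMap K B a := y.commutes a
          simp only [RingHom.comp_apply, RingHom.coe_coe, h2]
          rw [← IsScalarTower.algebraMap_apply K B F, IsScalarTower.algebraMap_apply K E F,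
            σ.commutes, τ.commutes]
        · intro i; exact hX i
      ext b
      obtain ⟨P, rfl⟩ := hy b
      exact DFunLike.congr_fun h1 P
    have := IsLocalization.ringHom_ext (nonZeroDivisors B) hB
    exact AlgHom.ext fun x => DFunLike.congr_fun this x
  have hG : G ≠ 0 := by
    refine mul_ne_zero ?_ (Finset.prod_ne_zero_iff.2 hℓ)
    intro h0
    exact mul_ne_zero hg hw (MvPolynomial.map_injective ι ι.injective (by rw [h0, map_zero]))
  have hinf : Infinite K := inferInstance
  obtain ⟨lam, hlam⟩ : ∃ lam : MonLE s D → K, MvPolynomial.eval (fun m => ι (lam m)) G ≠ 0 := by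
    by_contra! hall
    apply hG
    refine MvPolynomial.funext_set (fun _ => Set.range ι)
      (fun _ => Set.infinite_range_of_injective ι.injective) ?_
    intro x hx
    choose lam hlam using fun m => hx m (Set.mem_univ m)
    rw [map_zero, ← hall lam]
    congr 2
    funext m; exact (hlam m).symm
  have hev : MvPolynomial.eval (fun m => ι (lam m)) (MvPolynomial.map ι (g * w))
      = ι (MvPolynomial.eval lam (g * w)) := by
    rw [MvPolynomial.eval_map]
    have h := MvPolynomial.eval₂_comp_left ι (RingHom.id K) lam (g * w)
    exact h.symm
  rw [map_mul, hev, map_mul (eval lam), map_mul ι, map_prod] at hlam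
  have hl1 := left_ne_zero_of_mul (left_ne_zero_of_mul hlam)
  have hl2 := right_ne_zero_of_mul (left_ne_zero_of_mul hlam)
  have hl3 := Finset.prod_ne_zero_iff.1 (right_ne_zero_of_mul hlam)
  refine ⟨lam, fun h0 => hl1 (by rw [h0, map_zero]), ?_, ?_⟩
  · have hprim : IntermediateField.adjoin E {algebraMap B F (y (genPolyAt K s D lam))} = ⊤ := by
      rw [Field.primitive_element_iff_algHom_eq_of_eval' E L (fun x => IsAlgClosed.splits _)]
      intro σ τ hστ
      by_contra hne
      apply hl3 (σ, τ) (by simpa [T] using hne)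
      have hK : ∀ (ρ : F →ₐ[E] L) (a : K), ρ (algebraMap B F (algebraMap K B a)) = ι a := by
        intro ρ a
        rw [← IsScalarTower.algebraMap_apply K B F, IsScalarTower.algebraMap_apply K E F,
            ρ.commutes]
        rfl
      simp only [map_genPolyAt, map_sum, map_mul, hK] at hστ
      simp only [ℓ, map_sum, map_mul, eval_C, eval_X, sub_mul, Finset.sum_sub_distrib]
      simp only [mul_comm (ι _)] at hστ
      rw [hστ, sub_self]
    have := congrArg IntermediateField.toSubalgebra hprim
    rw [IntermediateField.adjoin_simple_toSubalgebra_of_isAlgebraic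
      (Algebra.IsAlgebraic.isAlgebraic _)] at this
    simpa using this
  · intro hint
    apply hl2
    have h1 : f (y (genPolyAt K s D lam)) = 0 := hfker hint
    rw [map_genPolyAt, map_sum] at h1
    have h2 : MvPolynomial.eval lam w = 0 := by
      simp only [w, map_sum, map_mul, eval_C, eval_X]
      rw [← h1]
      refine Finset.sum_congr rfl fun m _ => ?_
      rw [← Algebra.smul_def, map_smul, smul_eq_mul, mul_comm]
    rw [h2, map_zero]

theorem exists_conductor (A B E F : Type) [CommRing A] [IsDomain A]
    [CommRing B] [IsDomain B] [Field E] [Field F] [Algebra A B] [Algebra A E] [Algebra A F]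
    [Algebra B F] [Algebra E F] [IsScalarTower A B F] [IsScalarTower A E F]
    [IsFractionRing A E] [FaithfulSMul B F] [Module.Finite A B]
    (θ : B) (hθ : Algebra.adjoin E {algebraMap B F θ} = ⊤) :
    ∃ h : A, h ≠ 0 ∧ ∀ b : B, h • b ∈ Algebra.adjoin A {θ} := by
  classical
  have hone : ∀ b : B, ∃ h : A, h ≠ 0 ∧ h • b ∈ Algebra.adjoin A {θ} := by
    intro b
    have hb : algebraMap B F b ∈ Algebra.adjoin E {algebraMap B F θ} := by rw [hθ]; trivial
    rw [Algebra.adjoin_singleton_eq_range_aeval] at hb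
    obtain ⟨f, hf⟩ := hb
    have hf' : Polynomial.aeval (algebraMap B F θ) f = algebraMap B F b := hf
    obtain ⟨h, hh⟩ := IsLocalization.integerNormalization_map_to_map (nonZeroDivisors A) f
    refine ⟨h, nonZeroDivisors.ne_zero h.2, ?_⟩
    have h1 := congrArg (Polynomial.aeval (algebraMap B F θ)) hh
    rw [Polynomial.aeval_map_algebraMap, Polynomial.aeval_algebraMap_apply] at h1
    have h2 : (h : A) • f = Polynomial.C (algebraMap A E h) * f := by
      rw [← Polynomial.smul_eq_C_mul, algebraMap_smul]
    rw [h2, map_mul, Polynomial.aeval_C, hf', ← IsScalarTower.algebraMap_apply,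
      IsScalarTower.algebraMap_apply A B F, ← map_mul] at h1
    have h3 := FaithfulSMul.algebraMap_injective B F h1
    rw [Algebra.smul_def, ← h3]
    exact Polynomial.aeval_mem_adjoin_singleton A θ
  choose h hne hmem using hone
  obtain ⟨S, hS⟩ := Module.Finite.fg_top (R := A) (M := B)
  refine ⟨∏ b ∈ S, h b, Finset.prod_ne_zero_iff.2 fun b _ => hne b, ?_⟩
  have : (⊤ : Submodule A B) ≤ (Subalgebra.toSubmodule (Algebra.adjoin A {θ})).comap
      (LinearMap.lsmul A B (∏ b ∈ S, h b)) := by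
    rw [← hS, Submodule.span_le]
    intro b hb
    change (∏ b ∈ S, h b) • b ∈ Algebra.adjoin A {θ}
    rw [← Finset.prod_erase_mul _ _ hb, mul_smul]
    exact Subalgebra.smul_mem _ (hmem b) _
  intro b
  exact this (Submodule.mem_top (x := b))

theorem bad_finite (K B : Type) [Field K] [CommRing B] [IsDomain B] [Algebra K B]
    [IsNoetherianRing B] (θ h : B) (hh : h ≠ 0) :
    ∃ S : Finset K, ∀ c ∉ S, ∀ x y : B, h * x = (θ - algebraMap K B c) * y →
      (θ - algebraMap K B c) ∣ x := by
  classical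
  let M := B ⧸ Ideal.span {h}
  have hfin : (associatedPrimes B M).Finite := associatedPrimes.finite B M
  let S : Set K := ⋃ P ∈ associatedPrimes B M, {c | θ - algebraMap K B c ∈ P}
  have hS : S.Finite := by
    refine hfin.biUnion fun P hP => Set.Subsingleton.finite ?_
    intro c hc c' hc'
    by_contra hne
    have hprime : P.IsPrime := hP.isPrime
    apply hprime.ne_top
    have h1 := P.sub_mem hc hc'
    have h2 : (θ - algebraMap K B c) - (θ - algebraMap K B c') = algebraMap K B (c' - c) := by
      rw [map_sub]; ring
    rw [h2] at h1
    exact Ideal.eq_top_of_isUnit_mem _ h1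
      ((IsUnit.mk0 _ (sub_ne_zero.2 (Ne.symm hne))).map (algebraMap K B))
  refine ⟨hS.toFinset, ?_⟩
  intro c hc x y hxy
  rw [Set.Finite.mem_toFinset] at hc
  have hreg : IsSMulRegular M (θ - algebraMap K B c) := by
    by_contra hn
    have : (θ - algebraMap K B c) ∈ ⋃ p ∈ associatedPrimes B M, (p : Set B) := by
      rw [biUnion_associatedPrimes_eq_compl_regular]
      exact hn
    apply hc
    simpa [S] using this
  have hy : (Ideal.Quotient.mk (Ideal.span {h}) y) = 0 := by
    apply hreg
    change (θ - algebraMap K B c) • (Ideal.Quotient.mk (Ideal.span {h}) y) =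
      (θ - algebraMap K B c) • (0 : M)
    rw [smul_zero, Algebra.smul_def, Ideal.Quotient.algebraMap_eq, ← map_mul, ← hxy,
      Ideal.Quotient.eq_zero_iff_mem]
    exact Ideal.mem_span_singleton.2 (Dvd.intro _ rfl)
  rw [Ideal.Quotient.eq_zero_iff_mem, Ideal.mem_span_singleton] at hy
  obtain ⟨z, rfl⟩ := hy
  refine ⟨z, mul_left_cancel₀ hh ?_⟩
  rw [hxy]; ring

theorem exists_poly (K ι : Type) [Field K] (g : MvPolynomial ι K) (u v : ι → K)
    (hu : MvPolynomial.eval u g ≠ 0) : ∃ f : Polynomial K, f ≠ 0 ∧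
      ∀ c, f.eval c = MvPolynomial.eval (fun i => u i - c * v i) g := by
  let f : Polynomial K := MvPolynomial.eval₂ Polynomial.C
    (fun i => Polynomial.C (u i) - Polynomial.X * Polynomial.C (v i)) g
  have hf : ∀ c, f.eval c = MvPolynomial.eval (fun i => u i - c * v i) g := by
    intro c
    have := MvPolynomial.eval₂_comp_left (Polynomial.evalRingHom c) Polynomial.C
      (fun i => Polynomial.C (u i) - Polynomial.X * Polynomial.C (v i)) g
    rw [Polynomial.coe_evalRingHom] at this
    rw [show f.eval c = _ from this, MvPolynomial.eval, coe_eval₂Hom]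
    congr 1
    · ext x; simp
    · funext i; simp; exact mul_comm _ _
  refine ⟨f, ?_, hf⟩
  intro h0
  have := hf 0
  rw [h0] at this
  simp at this
  exact hu this.symm

theorem main_aux (K : Type) [Field K] [CharZero K] (hK : IsHilbertianField K)
    (s D : ℕ) (hD : 1 ≤ D) (B : Type) [CommRing B] [IsDomain B] [Algebra K B]
    (y : MvPolynomial (Fin s) K →ₐ[K] B) (hy : Function.Surjective y)
    (d : ℕ) (hd0 : 0 < d) (hd : ringKrullDim B = (d : WithBot ℕ∞))
    (g : MvPolynomial (MonLE s D) K) (hg : g ≠ 0) :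
    ∃ lam : MonLE s D → K, MvPolynomial.eval lam g ≠ 0 ∧
      (Ideal.span {y (genPolyAt K s D lam)}).IsPrime ∧
      ringKrullDim (B ⧸ Ideal.span {y (genPolyAt K s D lam)}) = ((d - 1 : ℕ) : WithBot ℕ∞) := by
  classical
  have hft : Algebra.FiniteType K B := Algebra.FiniteType.of_surjective y hy
  have hnoeth : IsNoetherianRing B :=
    isNoetherianRing_of_surjective _ _ (y : MvPolynomial (Fin s) K →+* B) hy
  obtain ⟨r, φ, hinj, hfin⟩ := exists_finite_inj_algHom_of_fg K B
  let := φ.toRingHom.toAlgebra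
  have : IsScalarTower K (MvPolynomial (Fin r) K) B :=
    IsScalarTower.of_algebraMap_eq fun x => (φ.commutes x).symm
  have : Module.Finite (MvPolynomial (Fin r) K) B := hfin
  have : FaithfulSMul (MvPolynomial (Fin r) K) B :=
    (faithfulSMul_iff_algebraMap_injective _ _).2 hinj
  have h1 := dim_int (MvPolynomial (Fin r) K) B hinj
  rw [MvPolynomial.ringKrullDim_of_isNoetherianRing, ringKrullDim_eq_zero_of_field, hd] at h1
  simp only [Nat.card_eq_fintype_card, Fintype.card_fin, zero_add] at h1
  have hrd : d = r := by exact_mod_cast h1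
  subst hrd
  let A := MvPolynomial (Fin d) K
  let E := FractionRing A
  let F := FractionRing B
  let : Algebra E F := FractionRing.liftAlgebra A F
  have : IsScalarTower K E F := by
    refine IsScalarTower.of_algebraMap_eq fun x => ?_
    rw [IsScalarTower.algebraMap_apply K A E, ← IsScalarTower.algebraMap_apply A E F,
      ← IsScalarTower.algebraMap_apply K A F]
  have : FiniteDimensional E F :=
    Module.Finite.of_isLocalization A B (nonZeroDivisors A)
  have htr : ¬ Algebra.IsIntegral K B := by
    intro h
    have h2 := h.isIntegral (φ (X ⟨0, hd0⟩))
    have h3 : IsIntegral K (X ⟨0, hd0⟩ : MvPolynomial (Fin d) K) :=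
      (isIntegral_algHom_iff φ hinj).1 h2
    exact MvPolynomial.transcendental_X K _ h3.isAlgebraic
  obtain ⟨lam, hlam, hadj, hnint⟩ := choose_theta K B E F s D hD y hy htr g hg
  set θ := y (genPolyAt K s D lam) with hθdef
  obtain ⟨h, hh0, hh⟩ := exists_conductor A B E F θ hadj
  obtain ⟨S, hS⟩ := bad_finite K B θ (algebraMap A B h) (fun h0 => hh0 (hinj (by
    rw [map_zero]; exact h0)))
  let z : MonLE s D := ⟨0, by simp⟩
  obtain ⟨f, hf0, hf⟩ := exists_poly K _ g lam (Pi.single z 1) hlam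
  have hθi : IsIntegral A θ := Algebra.IsIntegral.isIntegral θ
  have hmp : Prime (minpoly A θ) := minpoly.prime_of_isIntegrallyClosed hθi
  have hnc : ∀ f : Polynomial K, f.map MvPolynomial.C ≠ minpoly A θ := by
    intro f hf
    apply hnint
    have hmon : f.Monic := by
      refine Polynomial.monic_of_injective (MvPolynomial.C_injective (Fin d) K) ?_
      rw [hf]; exact minpoly.monic hθi
    refine ⟨f, hmon, ?_⟩
    have h2 := minpoly.aeval A θ
    rw [← hf] at h2
    have h3 : Polynomial.aeval θ (f.map (algebraMap K A)) = 0 := h2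
    rwa [Polynomial.aeval_map_algebraMap] at h3
  obtain ⟨c, hc, hirr⟩ := hilbert_one K hK d (minpoly A θ) hmp hnc
    (f * ∏ c ∈ S, (Polynomial.X - Polynomial.C c))
    (mul_ne_zero hf0 (Finset.prod_ne_zero_iff.2 fun c _ => Polynomial.X_sub_C_ne_zero c))
  rw [Polynomial.eval_mul, Polynomial.eval_prod] at hc
  have hc1 := left_ne_zero_of_mul hc
  have hc2 : c ∉ S := by
    intro hcS
    refine Finset.prod_ne_zero_iff.1 (right_ne_zero_of_mul hc) c hcS ?_
    simp
  have hCc : algebraMap A B (C c) = algebraMap K B c :=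
    (IsScalarTower.algebraMap_apply K A B c).symm
  have hpq := prime_quot A B E F θ hadj (C c) hirr.prime h hh (by
    rw [hCc]; exact hS c hc2)
  rw [hCc] at hpq
  have hθc : y (genPolyAt K s D (fun i => lam i - c * (Pi.single z 1 : MonLE s D → K) i)) =
      θ - algebraMap K B c := by
    rw [hθdef, map_genPolyAt, map_genPolyAt]
    simp only [map_sub, map_mul, sub_mul, Finset.sum_sub_distrib]
    congr 1
    rw [Finset.sum_eq_single z]
    · have : MvPolynomial.monomial z.1 (1 : K) = 1 := rfl
      simp [this]
    · intro m _ hm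
      simp [Pi.single_apply, hm]
    · simp
  refine ⟨fun i => lam i - c * (Pi.single z 1 : MonLE s D → K) i, ?_, ?_⟩
  · rw [← hf c]; exact hc1
  · rw [hθc]
    exact ⟨hpq.1, hpq.2.trans (dim_hyp K d _ hirr)⟩

/-- `K` Hilbertian of characteristic `0`, `p = ⟨P_1,…,P_l⟩ ⊆ K[Y]` prime
with `dim K[Y]/p = d > 0`, `D ≥ 1`.  The set of `λ ∈ K^{N_D}` such that the ideal
`⟨P_1,…,P_l, Q_D(λ,Y)⟩` of `K[Y]` is prime with quotient of Krull dimension `d − 1` is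
Zariski-dense in `K^{N_D}`. -/
theorem stmt_10 (K : Type) [Field K] [CharZero K] (hK : IsHilbertianField K)
    (s l : ℕ) (hl : 1 ≤ l) (P : Fin l → MvPolynomial (Fin s) K)
    (hp : (Ideal.span (Set.range P)).IsPrime)
    (d : ℕ) (hd0 : 0 < d)
    (hd : ringKrullDim (MvPolynomial (Fin s) K ⧸ Ideal.span (Set.range P)) = (d : WithBot ℕ∞))
    (D : ℕ) (hD : 1 ≤ D) :
    IsZariskiDense K {lam : MonLE s D → K |
      (Ideal.span (Set.range P ∪ {genPolyAt K s D lam})).IsPrime ∧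
      ringKrullDim (MvPolynomial (Fin s) K ⧸
        Ideal.span (Set.range P ∪ {genPolyAt K s D lam})) = ((d - 1 : ℕ) : WithBot ℕ∞)} := by
  intro g hg
  have hdom : IsDomain (MvPolynomial (Fin s) K ⧸ Ideal.span (Set.range P)) :=
    Ideal.Quotient.isDomain _
  obtain ⟨lam, h1, h2, h3⟩ := main_aux K hK s D hD
    (MvPolynomial (Fin s) K ⧸ Ideal.span (Set.range P))
    (Ideal.Quotient.mkₐ K (Ideal.span (Set.range P))) (Ideal.Quotient.mkₐ_surjective _ _)
    d hd0 hd g hg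
  refine ⟨lam, ?_, h1⟩
  have hI : Ideal.span (Set.range P ∪ {genPolyAt K s D lam}) =
      Ideal.span (Set.range P) ⊔ Ideal.span {genPolyAt K s D lam} := Ideal.span_union _ _
  have hJ : Ideal.span {Ideal.Quotient.mkₐ K (Ideal.span (Set.range P)) (genPolyAt K s D lam)} =
      (Ideal.span {genPolyAt K s D lam}).map (Ideal.Quotient.mk (Ideal.span (Set.range P))) := by
    rw [Ideal.map_span, Set.image_singleton]; rfl
  rw [hJ] at h2 h3
  let e := DoubleQuot.quotQuotEquivQuotSup (Ideal.span (Set.range P))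
    (Ideal.span {genPolyAt K s D lam})
  rw [Set.mem_setOf_eq, hI]
  refine ⟨?_, (ringKrullDim_eq_of_ringEquiv e).symm.trans h3⟩
  rw [← Ideal.Quotient.isDomain_iff_prime] at h2 ⊢
  exact e.symm.toMulEquiv.isDomain _

end
end

section
/- Let K be a field and p a prime ideal of K[T,Y] (T an r-tuple, Y an s-tuple of variables) with p ∩ K[T] = {0}, and let d be the Krull dimension of K(T)[Y]/p̃, where p̃ is the extension of p to K(T)[Y]; assume d > 0. Fix an integer ρ with 0 < ρ ≤ r and nonnegative integers D_1,…,D_ρ; for i = 1,…,ρ let Q_i(Λ_i,T,Y) = U_{D_i}(Λ_i,Y) − T_i, where U_{D_i}(Λ_i,Y) is the generic polynomial of degree D_i in Y with parameter tuple Λ_i, the Λ_i pairwise disjoint; write ΛΛ = (Λ_1,…,Λ_ρ). Then the ideal P = ⟨p, Q_1,…,Q_ρ⟩ of K[ΛΛ,T,Y] is prime, P ∩ K[ΛΛ] = {0}, and the extension of P to K(ΛΛ)[T,Y] is a prime ideal with K(ΛΛ)[T,Y] modulo it of Krull dimension d + r − ρ. -/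
open MvPolynomial

noncomputable section

/-- The index type of the parameters `ΛΛ = (Λ_1,…,Λ_ρ)`. -/
def LamIdx (s ρ : ℕ) (D : Fin ρ → ℕ) : Type := (i : Fin ρ) × MonLE s (D i)

/-- The quasi-generic polynomial `Q_i(Λ_i,T,Y) = U_{D_i}(Λ_i,Y) − T_i`, an element of
`K[ΛΛ][T,Y]`. -/
def quasiGenT (K : Type) [Field K] (r s ρ : ℕ) (hρr : ρ ≤ r) (D : Fin ρ → ℕ) (i : Fin ρ) :
    MvPolynomial (Fin r ⊕ Fin s) (MvPolynomial (LamIdx s ρ D) K) :=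
  (∑ mo : MonLE s (D i),
    MvPolynomial.monomial (Finsupp.mapDomain Sum.inr mo.1)
      (MvPolynomial.X (⟨i, mo⟩ : LamIdx s ρ D))) -
  MvPolynomial.X (Sum.inl (Fin.castLE hρr i))

/-- The ideal `P = ⟨p, Q_1,…,Q_ρ⟩` of `K[ΛΛ,T,Y]`. -/
def PIdeal (K : Type) [Field K] (r s ρ : ℕ) (hρr : ρ ≤ r) (D : Fin ρ → ℕ)
    (p : Ideal (MvPolynomial (Fin r ⊕ Fin s) K)) :
    Ideal (MvPolynomial (Fin r ⊕ Fin s) (MvPolynomial (LamIdx s ρ D) K)) :=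
  Ideal.map (MvPolynomial.map (MvPolynomial.C : K →+* MvPolynomial (LamIdx s ρ D) K)) p ⊔
    Ideal.span (Set.range (quasiGenT K r s ρ hρr D))


theorem aux_krullDim_integral {R S : Type} [CommRing R] [CommRing S] [Algebra R S]
    [Algebra.IsIntegral R S] (hinj : Function.Injective (algebraMap R S)) :
    ringKrullDim S = ringKrullDim R := by
  apply le_antisymm
  · refine Order.krullDim_le_of_strictMono (PrimeSpectrum.comap (algebraMap R S)) ?_
    intro I J h
    exact Ideal.IsIntegral.comap_lt_comap (R := R) (I := I.asIdeal) (J := J.asIdeal) h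
  · refine iSup_le fun l => ?_
    obtain ⟨Q, -, hQ, hQ'⟩ := Ideal.exists_ideal_over_prime_of_isIntegral
      (S := S) l.head.asIdeal ⊥ (by
        rw [← RingHom.ker_eq_comap_bot, (RingHom.injective_iff_ker_eq_bot _).mp hinj]
        exact bot_le)
    have : Q.LiesOver (RelSeries.head l).asIdeal := ⟨hQ'.symm⟩
    obtain ⟨L, hL, -, -⟩ := Ideal.exists_ltSeries_of_hasGoingUp l Q
    rw [← hL]
    exact le_iSup (fun L : LTSeries (PrimeSpectrum S) => (L.length : WithBot ℕ∞)) L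

theorem aux_dim_eq_trdeg (k R : Type) [Field k] [CommRing R] [IsDomain R] [Algebra k R]
    [Algebra.FiniteType k R] :
    ∃ n : ℕ, ringKrullDim R = (n : WithBot ℕ∞) ∧ Algebra.trdeg k R = n := by
  obtain ⟨n, g, hg, hint⟩ := exists_integral_inj_algHom_of_fg k R
  refine ⟨n, ?_, ?_⟩
  · let := g.toRingHom.toAlgebra
    have : Algebra.IsIntegral (MvPolynomial (Fin n) k) R := ⟨hint⟩
    rw [aux_krullDim_integral (R := MvPolynomial (Fin n) k) (S := R) hg,
      MvPolynomial.ringKrullDim_of_isNoetherianRing]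
    simp
  · let := g.toRingHom.toAlgebra
    have : Algebra.IsIntegral (MvPolynomial (Fin n) k) R := ⟨hint⟩
    have : IsScalarTower k (MvPolynomial (Fin n) k) R :=
      IsScalarTower.of_algebraMap_eq fun x => (g.commutes x).symm
    have : FaithfulSMul (MvPolynomial (Fin n) k) R :=
      (faithfulSMul_iff_algebraMap_injective _ _).mpr hg
    rw [← trdeg_add_eq k (MvPolynomial (Fin n) k) (A := R), trdeg_eq_zero (R := MvPolynomial (Fin n) k)]
    simp

theorem aux_trdeg_alg (K A B : Type) [Field K] [CommRing A] [CommRing B] [IsDomain A] [IsDomain B]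
    [Algebra K A] [Algebra K B] (f : A →ₐ[K] B) (hf : Function.Injective f)
    (halg : ∀ b : B, ∃ a a' : A, a ≠ 0 ∧ f a * b = f a') :
    Algebra.trdeg K B = Algebra.trdeg K A := by
  let := f.toRingHom.toAlgebra
  have : IsScalarTower K A B := IsScalarTower.of_algebraMap_eq fun x => (f.commutes x).symm
  have : FaithfulSMul A B := (faithfulSMul_iff_algebraMap_injective _ _).mpr hf
  have : Algebra.IsAlgebraic A B := ⟨fun b => by
    obtain ⟨a, a', ha, h⟩ := halg b
    refine ⟨Polynomial.C a * Polynomial.X - Polynomial.C a', ?_, ?_⟩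
    · intro h0
      have := congrArg (fun q => Polynomial.coeff q 1) h0
      simp [Polynomial.coeff_C] at this
      exact ha this
    · simp only [map_sub, map_mul, Polynomial.aeval_C, Polynomial.aeval_X]
      rw [sub_eq_zero]; exact h⟩
  rw [← trdeg_add_eq K A (A := B), trdeg_eq_zero (R := A), add_zero]

set_option maxHeartbeats 1000000 in
attribute [local instance] MvPolynomial.algebraMvPolynomial in
theorem aux_loc (K : Type) [Field K] (ι σ : Type) [Finite ι] [Finite σ]
    (Q : Ideal (MvPolynomial σ (MvPolynomial ι K))) (hQ : Q.IsPrime)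
    (hcap : ∀ g : MvPolynomial ι K, C g ∈ Q → g = 0) :
    (Q.map (MvPolynomial.map (σ := σ) (algebraMap (MvPolynomial ι K) (RatFuncField K ι)))).IsPrime ∧
    ∃ n : ℕ, ringKrullDim (MvPolynomial σ (RatFuncField K ι) ⧸
      Q.map (MvPolynomial.map (σ := σ) (algebraMap (MvPolynomial ι K) (RatFuncField K ι))))
        = (n : WithBot ℕ∞) ∧
      Algebra.trdeg K (MvPolynomial σ (MvPolynomial ι K) ⧸ Q) = ((n + Nat.card ι : ℕ) : Cardinal) := by
  set M := (nonZeroDivisors (MvPolynomial ι K)).map (C (σ := σ)) with hM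
  have : IsLocalization M (MvPolynomial σ (RatFuncField K ι)) := MvPolynomial.isLocalization _ _
  have halg : algebraMap (MvPolynomial σ (MvPolynomial ι K)) (MvPolynomial σ (RatFuncField K ι))
    = MvPolynomial.map (σ := σ) (algebraMap (MvPolynomial ι K) (RatFuncField K ι)) := rfl
  have hdis : Disjoint (M : Set (MvPolynomial σ (MvPolynomial ι K))) Q := by
    rw [Set.disjoint_left]
    rintro _ ⟨g, hg, rfl⟩ h
    exact nonZeroDivisors.ne_zero hg (hcap g h)
  rw [← halg]
  have hprime := IsLocalization.isPrime_of_isPrime_disjoint M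
    (MvPolynomial σ (RatFuncField K ι)) Q hQ hdis
  refine ⟨hprime, ?_⟩
  have hunder := IsLocalization.under_map_of_isPrime_disjoint M
    (MvPolynomial σ (RatFuncField K ι)) hQ hdis
  set Q' := Q.map (algebraMap (MvPolynomial σ (MvPolynomial ι K))
    (MvPolynomial σ (RatFuncField K ι))) with hQ'
  obtain ⟨n, hn, hn'⟩ := aux_dim_eq_trdeg (RatFuncField K ι) (MvPolynomial σ (RatFuncField K ι) ⧸ Q')
  refine ⟨n, hn, ?_⟩
  let f : (MvPolynomial σ (MvPolynomial ι K) ⧸ Q) →ₐ[K] (MvPolynomial σ (RatFuncField K ι) ⧸ Q') :=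
    Ideal.quotientMapₐ Q' (MvPolynomial.mapAlgHom (σ := σ) (IsScalarTower.toAlgHom K (MvPolynomial ι K) (RatFuncField K ι))) Ideal.le_comap_map
  have hf : Function.Injective f := Ideal.quotientMap_injective' (H := Ideal.le_comap_map) (le_of_eq hunder)
  have hfr : ∀ b : (MvPolynomial σ (RatFuncField K ι) ⧸ Q'),
      ∃ a a' : (MvPolynomial σ (MvPolynomial ι K) ⧸ Q), a ≠ 0 ∧ f a * b = f a' := by
    intro b
    obtain ⟨b, rfl⟩ := Ideal.Quotient.mk_surjective (I := Q') b
    obtain ⟨⟨a, m⟩, h⟩ := IsLocalization.surj M b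
    refine ⟨Ideal.Quotient.mk Q m, Ideal.Quotient.mk Q a, ?_, ?_⟩
    · intro h0
      exact Set.disjoint_left.mp hdis m.2 (Ideal.Quotient.eq_zero_iff_mem.mp h0)
    · have h' := congrArg (Ideal.Quotient.mk Q') h
      rw [mul_comm, map_mul] at h'
      exact h'
  have h1 := aux_trdeg_alg K (MvPolynomial σ (MvPolynomial ι K) ⧸ Q)
    (MvPolynomial σ (RatFuncField K ι) ⧸ Q') f hf hfr
  have h2 := aux_trdeg_alg K (MvPolynomial ι K) (RatFuncField K ι)
    (IsScalarTower.toAlgHom K _ _) (IsFractionRing.injective _ _) (by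
    intro b
    obtain ⟨⟨a, m⟩, h⟩ := IsLocalization.surj (nonZeroDivisors (MvPolynomial ι K)) b
    refine ⟨m, a, nonZeroDivisors.ne_zero m.2, ?_⟩
    rw [mul_comm]; exact h)
  rw [← h1, ← trdeg_add_eq K (RatFuncField K ι), h2, hn', add_comm]
  simp [Nat.cast_card]

theorem aux_indep {K A : Type} [Field K] [CommRing A] [Algebra K A] {σ τ : Type}
    (c : τ → MvPolynomial σ A)
    (hc : AlgebraicIndependent K (fun i => constantCoeff (c i))) :
    AlgebraicIndependent K (Sum.elim (fun j : σ => (X j : MvPolynomial σ A)) c) := by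
  classical
  rw [algebraicIndependent_iff_injective_aeval, injective_iff_map_eq_zero] at *
  intro g hg
  have key : ∀ q : MvPolynomial (σ ⊕ τ) K,
      aeval (Sum.elim (fun j : σ => (X j : MvPolynomial σ A)) c) q =
      eval₂Hom (aeval c : MvPolynomial τ K →ₐ[K] MvPolynomial σ A).toRingHom X
        (sumAlgEquiv K σ τ q) := by
    intro q
    have : (aeval (Sum.elim (fun j : σ => (X j : MvPolynomial σ A)) c) :
        MvPolynomial (σ ⊕ τ) K →ₐ[K] MvPolynomial σ A).toRingHom =
      (eval₂Hom (aeval c : MvPolynomial τ K →ₐ[K] MvPolynomial σ A).toRingHom X).comp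
        (sumAlgEquiv K σ τ).toRingEquiv.toRingHom := by
      apply MvPolynomial.ringHom_ext
      · intro a
        simp
      · rintro (j | i) <;> simp
    exact congrArg (fun f => f q) this
  rw [key] at hg
  have hcc : ∀ q : MvPolynomial τ K, constantCoeff (aeval c q) =
      aeval (fun i => constantCoeff (c i)) q := by
    intro q
    have : (constantCoeff.comp (aeval c : MvPolynomial τ K →ₐ[K] MvPolynomial σ A).toRingHom) =
      (aeval (fun i => constantCoeff (c i)) : MvPolynomial τ K →ₐ[K] A).toRingHom := by
      apply MvPolynomial.ringHom_ext
      · intro a; simp [MvPolynomial.algebraMap_apply]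
      · intro i; simp
    exact congrArg (fun f => f q) this
  suffices sumAlgEquiv K σ τ g = 0 by simpa using this
  generalize sumAlgEquiv K σ τ g = G at hg
  by_contra hG
  have hne : (G.support : Set (σ →₀ ℕ)).Nonempty := by
    rw [Finset.coe_nonempty, Finset.nonempty_iff_ne_empty, Ne, MvPolynomial.support_eq_empty]
    exact hG
  obtain ⟨m, hm⟩ := G.support.exists_minimal hne
  have hmon : ∀ b : σ →₀ ℕ, ∏ i ∈ b.support, (X i : MvPolynomial σ A) ^ b i = monomial b 1 := by
    intro b
    rw [monomial_eq]; simp [Finsupp.prod]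
  have h1 := congrArg (coeff m) hg
  rw [coe_eval₂Hom, eval₂_eq, coeff_sum, Finset.sum_eq_single m] at h1
  · rw [hmon, coeff_mul_monomial', if_pos le_rfl, tsub_self, mul_one] at h1
    have h2 := hc _ ((hcc _).symm.trans h1)
    exact (mem_support_iff.mp hm.1) h2
  · intro b hb hbm
    rw [hmon, coeff_mul_monomial', if_neg]
    intro hle
    exact hbm (hm.eq_of_le hb hle)
  · intro h; exact absurd hm.1 h

instance auxFiniteLam (s ρ : ℕ) (D : Fin ρ → ℕ) : Finite (LamIdx s ρ D) := by
  unfold LamIdx; infer_instance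

/-- The non-constant parameters. -/
abbrev LamNC (s ρ : ℕ) (D : Fin ρ → ℕ) : Type := {l : LamIdx s ρ D // l.2.1 ≠ 0}

/-- The constant parameters. -/
abbrev LamC (s ρ : ℕ) (D : Fin ρ → ℕ) : Type := {l : LamIdx s ρ D // ¬ l.2.1 ≠ 0}

/-- The zero monomial. -/
def monZero (s D : ℕ) : MonLE s D := ⟨0, by simp⟩

theorem aux_card_lam (s ρ : ℕ) (D : Fin ρ → ℕ) :
    Nat.card (LamIdx s ρ D) = Nat.card (LamNC s ρ D) + ρ := by
  classical
  rw [← Nat.card_congr (Equiv.sumCompl (fun l : LamIdx s ρ D => l.2.1 ≠ 0)), Nat.card_sum]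
  congr 1
  let e : Fin ρ ≃ LamC s ρ D :=
    { toFun := fun i => ⟨⟨i, monZero s (D i)⟩, by simp [monZero]⟩
      invFun := fun l => l.1.1
      left_inv := fun i => rfl
      right_inv := by
        rintro ⟨⟨i, m, hm⟩, h⟩
        simp only [ne_eq, not_not] at h
        subst h
        rfl }
  rw [← Nat.card_congr e]
  simp

/-- The parameter of index `i` attached to the monomial `m`. -/
def lamMk (s ρ : ℕ) (D : Fin ρ → ℕ) (i : Fin ρ) (m : MonLE s (D i)) : LamIdx s ρ D := ⟨i, m⟩

theorem quasi_eq (K : Type) [Field K] (r s ρ : ℕ) (hρr : ρ ≤ r) (D : Fin ρ → ℕ) (i : Fin ρ) :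
    quasiGenT K r s ρ hρr D i =
    (∑ mo : MonLE s (D i), (monomial (Finsupp.mapDomain Sum.inr mo.1)
      (X (lamMk s ρ D i mo) : MvPolynomial (LamIdx s ρ D) K) :
        MvPolynomial (Fin r ⊕ Fin s) (MvPolynomial (LamIdx s ρ D) K))) -
    X (Sum.inl (Fin.castLE hρr i)) := rfl

theorem aux_trdeg_equiv (K A B : Type) [Field K] [CommRing A] [CommRing B] [Algebra K A]
    [Algebra K B] (f : A ≃ₐ[K] B) : Algebra.trdeg K A = Algebra.trdeg K B := f.trdeg_eq

section phi
open scoped Classical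
variable (K : Type) [Field K] (r s ρ : ℕ) (hρr : ρ ≤ r) (D : Fin ρ → ℕ)
    (p : Ideal (MvPolynomial (Fin r ⊕ Fin s) K))

/-- class of the monomial `Y^m` -/
def yMon (m : Fin s →₀ ℕ) : MvPolynomial (Fin r ⊕ Fin s) K ⧸ p :=
  Ideal.Quotient.mk p (monomial (Finsupp.mapDomain Sum.inr m) 1)

/-- class of `T_i` -/
def tVar (i : Fin r) : MvPolynomial (Fin r ⊕ Fin s) K ⧸ p :=
  Ideal.Quotient.mk p (X (Sum.inl i))

/-- Values of the constant parameters. -/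
def constVal (i : Fin ρ) : MvPolynomial (LamNC s ρ D) (MvPolynomial (Fin r ⊕ Fin s) K ⧸ p) :=
  C (tVar K r s p (Fin.castLE hρr i)) - ∑ m : MonLE s (D i),
    if h : m.1 ≠ 0 then X (⟨lamMk s ρ D i m, h⟩ : LamNC s ρ D) * C (yMon K r s p m.1) else 0

/-- Values of all parameters. -/
def lamVal (l : LamIdx s ρ D) :
    MvPolynomial (LamNC s ρ D) (MvPolynomial (Fin r ⊕ Fin s) K ⧸ p) :=
  if h : l.2.1 ≠ 0 then X ⟨l, h⟩ else constVal K r s ρ hρr D p l.1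

/-- The elimination morphism. -/
def phiHom : MvPolynomial (Fin r ⊕ Fin s) (MvPolynomial (LamIdx s ρ D) K) →ₐ[K]
    MvPolynomial (LamNC s ρ D) (MvPolynomial (Fin r ⊕ Fin s) K ⧸ p) :=
  aevalTower (aeval (lamVal K r s ρ hρr D p)) (fun v => C (Ideal.Quotient.mk p (X v)))

theorem phi_mapC (f : MvPolynomial (Fin r ⊕ Fin s) K) :
    phiHom K r s ρ hρr D p (MvPolynomial.map C f) = C (Ideal.Quotient.mk p f) := by
  have : (phiHom K r s ρ hρr D p).toRingHom.comp (MvPolynomial.map C) =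
      C.comp (Ideal.Quotient.mk p) := by
    apply MvPolynomial.ringHom_ext
    · intro a
      simp [phiHom]
      rfl
    · intro v; simp [phiHom]
  exact congrArg (fun g => g f) this

theorem phi_C (g : MvPolynomial (LamIdx s ρ D) K) :
    phiHom K r s ρ hρr D p (C g) = aeval (lamVal K r s ρ hρr D p) g := by
  simp [phiHom]

theorem phi_mon (m : Fin s →₀ ℕ) (g : MvPolynomial (LamIdx s ρ D) K) :
    phiHom K r s ρ hρr D p (monomial (Finsupp.mapDomain Sum.inr m) g) =
      aeval (lamVal K r s ρ hρr D p) g * C (yMon K r s p m) := by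
  have h : (monomial (Finsupp.mapDomain Sum.inr m) g :
      MvPolynomial (Fin r ⊕ Fin s) (MvPolynomial (LamIdx s ρ D) K)) =
      C g * MvPolynomial.map C (monomial (Finsupp.mapDomain Sum.inr m) 1) := by
    rw [map_monomial, C_mul_monomial]; simp
  rw [h, map_mul, phi_C, phi_mapC]
  rfl

theorem phi_quasi (i : Fin ρ) : phiHom K r s ρ hρr D p (quasiGenT K r s ρ hρr D i) = 0 := by
  have hX : phiHom K r s ρ hρr D p (X (Sum.inl (Fin.castLE hρr i))) =
      C (tVar K r s p (Fin.castLE hρr i)) := by simp [phiHom, tVar]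
  rw [quasi_eq, map_sub, map_sum, hX, sub_eq_zero]
  simp only [phi_mon, aeval_X]
  rw [← Finset.add_sum_erase _ _ (Finset.mem_univ (monZero s (D i)))]
  have h0 : lamVal K r s ρ hρr D p (lamMk s ρ D i (monZero s (D i))) = constVal K r s ρ hρr D p i := by
    simp [lamVal, monZero, lamMk]
  have hy : yMon K r s p (monZero s (D i)).1 = 1 := by simp [yMon, monZero]
  rw [h0, hy, C_1, mul_one, constVal, ← Finset.add_sum_erase Finset.univ (fun m : MonLE s (D i) =>
    if h : m.1 ≠ 0 then X (⟨lamMk s ρ D i m, h⟩ : LamNC s ρ D) * C (yMon K r s p m.1) else 0)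
    (Finset.mem_univ (monZero s (D i)))]
  have hs : ∀ m ∈ Finset.univ.erase (monZero s (D i)),
      lamVal K r s ρ hρr D p (lamMk s ρ D i m) * C (yMon K r s p m.1) =
      if h : m.1 ≠ 0 then X (⟨lamMk s ρ D i m, h⟩ : LamNC s ρ D) * C (yMon K r s p m.1) else 0 := by
    intro m hm
    have : m.1 ≠ 0 := fun h => (Finset.ne_of_mem_erase hm) (Subtype.ext h)
    have hl : lamVal K r s ρ hρr D p (lamMk s ρ D i m) = X ⟨lamMk s ρ D i m, this⟩ := dif_pos this
    rw [hl, dif_pos this]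
  rw [Finset.sum_congr rfl hs]
  simp [monZero]

theorem phi_surj : Function.Surjective (phiHom K r s ρ hρr D p) := by
  intro q
  induction q using MvPolynomial.induction_on with
  | C a =>
    obtain ⟨a, rfl⟩ := Ideal.Quotient.mk_surjective a
    exact ⟨_, phi_mapC ..⟩
  | add a b ha hb =>
    obtain ⟨a, rfl⟩ := ha
    obtain ⟨b, rfl⟩ := hb
    exact ⟨a + b, map_add _ _ _⟩
  | mul_X a l ha =>
    obtain ⟨a, rfl⟩ := ha
    refine ⟨a * C (X l.1), ?_⟩
    rw [map_mul, phi_C, aeval_X, lamVal, dif_pos l.2]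

/-- The inverse morphism. -/
def psiHom : MvPolynomial (LamNC s ρ D) (MvPolynomial (Fin r ⊕ Fin s) K ⧸ p) →+*
    (MvPolynomial (Fin r ⊕ Fin s) (MvPolynomial (LamIdx s ρ D) K) ⧸ PIdeal K r s ρ hρr D p) :=
  eval₂Hom (Ideal.Quotient.lift p ((Ideal.Quotient.mk (PIdeal K r s ρ hρr D p)).comp
      (MvPolynomial.map C)) (fun a ha => Ideal.Quotient.eq_zero_iff_mem.mpr
        (Ideal.mem_sup_left (Ideal.mem_map_of_mem _ ha))))
    (fun l : LamNC s ρ D => Ideal.Quotient.mk (PIdeal K r s ρ hρr D p) (C (X l.1)))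

theorem psi_C (f : MvPolynomial (Fin r ⊕ Fin s) K) :
    psiHom K r s ρ hρr D p (C (Ideal.Quotient.mk p f)) =
      Ideal.Quotient.mk (PIdeal K r s ρ hρr D p) (MvPolynomial.map C f) := by
  simp only [psiHom, coe_eval₂Hom, eval₂_C]
  rfl

theorem psi_lam (l : LamIdx s ρ D) :
    psiHom K r s ρ hρr D p (lamVal K r s ρ hρr D p l) = Ideal.Quotient.mk (PIdeal K r s ρ hρr D p) (C (X l)) := by
  by_cases h : l.2.1 ≠ 0
  · rw [lamVal, dif_pos h]; simp [psiHom]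
  · obtain ⟨i, m, hm⟩ := l
    simp only [ne_eq, not_not] at h
    subst h
    have h0 : lamVal K r s ρ hρr D p (lamMk s ρ D i ⟨0, hm⟩) = constVal K r s ρ hρr D p i := by
      simp [lamVal, lamMk]
    have hq : (Ideal.Quotient.mk (PIdeal K r s ρ hρr D p)) (quasiGenT K r s ρ hρr D i) = 0 :=
      Ideal.Quotient.eq_zero_iff_mem.mpr
        (Ideal.mem_sup_right (Ideal.subset_span (Set.mem_range_self i)))
    rw [quasi_eq, map_sub, sub_eq_zero, map_sum,
      ← Finset.add_sum_erase _ _ (Finset.mem_univ (monZero s (D i)))] at hq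
    have hz : (monomial (Finsupp.mapDomain Sum.inr (monZero s (D i)).1)
      (X (lamMk s ρ D i (monZero s (D i)))) :
        MvPolynomial (Fin r ⊕ Fin s) (MvPolynomial (LamIdx s ρ D) K)) = C (X (lamMk s ρ D i ⟨0, hm⟩)) := by
      simp [monZero]
    rw [hz] at hq
    change psiHom K r s ρ hρr D p (lamVal K r s ρ hρr D p (lamMk s ρ D i ⟨0, hm⟩)) =
      Ideal.Quotient.mk (PIdeal K r s ρ hρr D p) (C (X (lamMk s ρ D i ⟨0, hm⟩)))
    rw [h0, constVal, map_sub, tVar, psi_C, map_X, ← hq, map_sum,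
      ← Finset.add_sum_erase Finset.univ _ (Finset.mem_univ (monZero s (D i)))]
    have hs : ∀ m ∈ Finset.univ.erase (monZero s (D i)),
      psiHom K r s ρ hρr D p (if h : m.1 ≠ 0 then
        X (⟨lamMk s ρ D i m, h⟩ : LamNC s ρ D) * C (yMon K r s p m.1) else 0) =
      Ideal.Quotient.mk (PIdeal K r s ρ hρr D p) (monomial (Finsupp.mapDomain Sum.inr m.1)
        (X (lamMk s ρ D i m))) := by
      intro m hm
      have : m.1 ≠ 0 := fun h => (Finset.ne_of_mem_erase hm) (Subtype.ext h)
      have hx : psiHom K r s ρ hρr D p (X (⟨lamMk s ρ D i m, this⟩ : LamNC s ρ D)) =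
        Ideal.Quotient.mk (PIdeal K r s ρ hρr D p) (C (X (lamMk s ρ D i m))) := by simp [psiHom]
      rw [dif_pos this, map_mul, yMon, psi_C, hx, ← map_mul, map_monomial, C_mul_monomial]
      simp
    rw [Finset.sum_congr rfl hs]
    simp [monZero]

theorem psi_phi (f : MvPolynomial (Fin r ⊕ Fin s) (MvPolynomial (LamIdx s ρ D) K)) :
    psiHom K r s ρ hρr D p (phiHom K r s ρ hρr D p f) = Ideal.Quotient.mk (PIdeal K r s ρ hρr D p) f := by
  have : (psiHom K r s ρ hρr D p).comp (phiHom K r s ρ hρr D p).toRingHom =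
      Ideal.Quotient.mk (PIdeal K r s ρ hρr D p) := by
    apply MvPolynomial.ringHom_ext
    · intro g
      have h2 : ((psiHom K r s ρ hρr D p).comp (phiHom K r s ρ hρr D p).toRingHom).comp C =
        (Ideal.Quotient.mk (PIdeal K r s ρ hρr D p)).comp C := by
        apply MvPolynomial.ringHom_ext
        · intro a
          have h3 := psi_C K r s ρ hρr D p (C a)
          rw [← phi_mapC K r s ρ hρr D p, map_C] at h3
          exact h3
        · intro l
          change psiHom K r s ρ hρr D p (phiHom K r s ρ hρr D p (C (X l))) = _
          rw [phi_C, aeval_X, psi_lam]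
          first | done | rfl
      exact congrArg (fun q => q g) h2
    · intro v
      have h3 := psi_C K r s ρ hρr D p (X v)
      rw [← phi_mapC K r s ρ hρr D p, map_X] at h3
      exact h3
  exact congrArg (fun q => q f) this

theorem phi_ker : RingHom.ker (phiHom K r s ρ hρr D p) = PIdeal K r s ρ hρr D p := by
  apply le_antisymm
  · intro f hf
    rw [← Ideal.Quotient.eq_zero_iff_mem, ← psi_phi, (RingHom.mem_ker).mp hf, map_zero]
  · refine sup_le ?_ ?_
    · rw [Ideal.map_le_iff_le_comap]
      intro f hf
      rw [Ideal.mem_comap, RingHom.mem_ker, phi_mapC, Ideal.Quotient.eq_zero_iff_mem.mpr hf, C_0]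
    · rw [Ideal.span_le]
      rintro _ ⟨i, rfl⟩
      exact phi_quasi ..

theorem lam_indep
    (hcap : ∀ g : MvPolynomial (Fin r) K, MvPolynomial.rename Sum.inl g ∈ p → g = 0) :
    AlgebraicIndependent K (lamVal K r s ρ hρr D p) := by
  have ht : AlgebraicIndependent K (tVar K r s p) := by
    rw [algebraicIndependent_iff_injective_aeval, injective_iff_map_eq_zero]
    intro g hg
    apply hcap
    rw [← Ideal.Quotient.eq_zero_iff_mem, ← hg]
    have : (Ideal.Quotient.mkₐ K p).comp (rename Sum.inl) = aeval (tVar K r s p) := by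
      apply MvPolynomial.algHom_ext
      intro i; simp [tVar]
    exact congrArg (fun q => q g) this
  have hc0 : ∀ i, constantCoeff (constVal K r s ρ hρr D p i) =
      tVar K r s p (Fin.castLE hρr i) := by
    intro i
    rw [constVal, map_sub, constantCoeff_C, map_sum, Finset.sum_eq_zero, sub_zero]
    intro m _
    split_ifs <;> simp
  have h1 := aux_indep (K := K) (σ := LamNC s ρ D)
    (fun l : LamC s ρ D => constVal K r s ρ hρr D p l.1.1) (by
      simp only [hc0]
      refine ht.comp (fun l : LamC s ρ D => Fin.castLE hρr l.1.1) ?_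
      rintro ⟨⟨i, m, hm⟩, h⟩ ⟨⟨i', m', hm'⟩, h'⟩ hii
      have hi := Fin.castLE_injective hρr hii
      simp only [ne_eq, not_not] at h h' hi
      subst h h' hi
      rfl)
  have h2 : Sum.elim (fun j : LamNC s ρ D => (X j : MvPolynomial (LamNC s ρ D)
      (MvPolynomial (Fin r ⊕ Fin s) K ⧸ p)))
      (fun l : LamC s ρ D => constVal K r s ρ hρr D p l.1.1) =
      lamVal K r s ρ hρr D p ∘ Equiv.sumCompl (fun l : LamIdx s ρ D => l.2.1 ≠ 0) := by
    funext x
    rcases x with x | x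
    · simp only [Sum.elim_inl, Function.comp, Equiv.sumCompl_apply_inl]
      rw [lamVal, dif_pos x.2]
    · simp only [Sum.elim_inr, Function.comp, Equiv.sumCompl_apply_inr]
      rw [lamVal, dif_neg x.2]
  rw [h2] at h1
  exact (algebraicIndependent_equiv _).mp h1

end phi

theorem aux_trdeg_A (K : Type) [Field K] (r s : ℕ)
    (p : Ideal (MvPolynomial (Fin r ⊕ Fin s) K)) (hp : p.IsPrime)
    (hcap : ∀ g : MvPolynomial (Fin r) K, MvPolynomial.rename Sum.inl g ∈ p → g = 0)
    (d : ℕ) 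
    (hd : ringKrullDim (MvPolynomial (Fin s) (RatFuncField K (Fin r)) ⧸
        Ideal.map (extHom K r s) p) = (d : WithBot ℕ∞)) :
    Algebra.trdeg K (MvPolynomial (Fin r ⊕ Fin s) K ⧸ p) = ((d + r : ℕ) : Cardinal) := by
  let e : MvPolynomial (Fin r ⊕ Fin s) K ≃ₐ[K] MvPolynomial (Fin s) (MvPolynomial (Fin r) K) :=
    (renameEquiv K (Equiv.sumComm (Fin r) (Fin s))).trans (sumAlgEquiv K (Fin s) (Fin r))
  have hext : extHom K r s = (MvPolynomial.map
      (algebraMap (MvPolynomial (Fin r) K) (RatFuncField K (Fin r)))).comp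
      (e : MvPolynomial (Fin r ⊕ Fin s) K →+* MvPolynomial (Fin s) (MvPolynomial (Fin r) K)) := by
    apply MvPolynomial.ringHom_ext
    · intro a; simp [extHom, e]
    · rintro (i | j) <;> simp [extHom, e]
  have hren : ∀ g : MvPolynomial (Fin r) K, e (rename Sum.inl g) = C g := by
    intro g
    have : (e : MvPolynomial (Fin r ⊕ Fin s) K →ₐ[K] _).comp (rename Sum.inl) =
      IsScalarTower.toAlgHom K (MvPolynomial (Fin r) K)
        (MvPolynomial (Fin s) (MvPolynomial (Fin r) K)) := by
      apply MvPolynomial.algHom_ext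
      intro i; simp [e]
    exact congrArg (fun q => q g) this
  set Q := p.map (e : MvPolynomial (Fin r ⊕ Fin s) K →+*
    MvPolynomial (Fin s) (MvPolynomial (Fin r) K)) with hQ
  have hmem : ∀ x, e x ∈ Q ↔ x ∈ p := by
    intro x
    constructor
    · intro h
      obtain ⟨y, hy, hxy⟩ := (Ideal.mem_map_iff_of_surjective _ e.surjective).mp h
      rwa [← e.injective hxy]
    · intro h; exact Ideal.mem_map_of_mem _ h
  have hQp : Q.IsPrime := Ideal.map_isPrime_of_equiv e
  obtain ⟨-, n, hn, hn'⟩ := aux_loc K (Fin r) (Fin s) Q hQp (by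
    intro g hg
    rw [← hren, hmem] at hg
    exact hcap g hg)
  rw [hext, ← Ideal.map_map] at hd
  have hnd : n = d := by
    have := hn.symm.trans hd
    exact_mod_cast this
  rw [aux_trdeg_equiv K _ (MvPolynomial (Fin s) (MvPolynomial (Fin r) K) ⧸ Q)
    (Ideal.quotientEquivAlg p Q e rfl), hn', hnd]
  simp

/-- `p ⊆ K[T,Y]` prime with `p ∩ K[T] = 0` and `dim K(T)[Y]/p̃ = d > 0`;
for `0 < ρ ≤ r` and quasi-generic polynomials `Q_i = U_{D_i}(Λ_i,Y) − T_i`, the ideal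
`P = ⟨p, Q_1,…,Q_ρ⟩ ⊆ K[ΛΛ,T,Y]` is prime, `P ∩ K[ΛΛ] = 0`, and the extension of `P` to
`K(ΛΛ)[T,Y]` is prime with quotient of Krull dimension `d + r − ρ`. -/
theorem stmt_12 (K : Type) [Field K] (r s : ℕ)
    (p : Ideal (MvPolynomial (Fin r ⊕ Fin s) K)) (hp : p.IsPrime)
    (hcap : ∀ g : MvPolynomial (Fin r) K, MvPolynomial.rename Sum.inl g ∈ p → g = 0)
    (d : ℕ) (hd0 : 0 < d)
    (hd : ringKrullDim (MvPolynomial (Fin s) (RatFuncField K (Fin r)) ⧸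
        Ideal.map (extHom K r s) p) = (d : WithBot ℕ∞))
    (ρ : ℕ) (hρ0 : 0 < ρ) (hρr : ρ ≤ r) (D : Fin ρ → ℕ) :
    (PIdeal K r s ρ hρr D p).IsPrime ∧
    (∀ g : MvPolynomial (LamIdx s ρ D) K,
      MvPolynomial.C g ∈ PIdeal K r s ρ hρr D p → g = 0) ∧
    (Ideal.map
      (MvPolynomial.map
        (algebraMap (MvPolynomial (LamIdx s ρ D) K) (RatFuncField K (LamIdx s ρ D))))
      (PIdeal K r s ρ hρr D p)).IsPrime ∧
    ringKrullDim (MvPolynomial (Fin r ⊕ Fin s) (RatFuncField K (LamIdx s ρ D)) ⧸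
      Ideal.map
        (MvPolynomial.map
          (algebraMap (MvPolynomial (LamIdx s ρ D) K) (RatFuncField K (LamIdx s ρ D))))
        (PIdeal K r s ρ hρr D p)) = ((d + r - ρ : ℕ) : WithBot ℕ∞) := by
  set A := MvPolynomial (Fin r ⊕ Fin s) K ⧸ p with hA
  have hdom : IsDomain A := Ideal.Quotient.isDomain p
  have hker := phi_ker K r s ρ hρr D p
  have hP : (PIdeal K r s ρ hρr D p).IsPrime := by
    rw [← hker]; exact RingHom.ker_isPrime _
  have hcapP : ∀ g : MvPolynomial (LamIdx s ρ D) K,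
      MvPolynomial.C g ∈ PIdeal K r s ρ hρr D p → g = 0 := by
    intro g hg
    rw [← hker, RingHom.mem_ker, phi_C] at hg
    have h := lam_indep K r s ρ hρr D p hcap
    rw [algebraicIndependent_iff_injective_aeval, injective_iff_map_eq_zero] at h
    exact h g hg
  obtain ⟨h3, n, hn, hn'⟩ := aux_loc K (LamIdx s ρ D) (Fin r ⊕ Fin s) _ hP hcapP
  refine ⟨hP, hcapP, h3, ?_⟩
  rw [hn]
  have e : (MvPolynomial (Fin r ⊕ Fin s) (MvPolynomial (LamIdx s ρ D) K) ⧸ PIdeal K r s ρ hρr D p)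
      ≃ₐ[K] MvPolynomial (LamNC s ρ D) A :=
    (Ideal.quotientEquivAlgOfEq K hker.symm).trans
      (Ideal.quotientKerAlgEquivOfSurjective (phi_surj K r s ρ hρr D p))
  have h4 : Algebra.trdeg K (MvPolynomial (LamNC s ρ D) A) =
      ((d + r + Nat.card (LamNC s ρ D) : ℕ) : Cardinal) := by
    rw [← trdeg_add_eq K A, aux_trdeg_A K r s p hp hcap d hd]
    simp [Nat.cast_card]
  rw [aux_trdeg_equiv K _ (MvPolynomial (LamNC s ρ D) A) e, h4, aux_card_lam] at hn'
  have h5 : d + r + Nat.card (LamNC s ρ D) = n + (Nat.card (LamNC s ρ D) + ρ) := by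
    exact_mod_cast hn'
  have h6 : n = d + r - ρ := by omega
  rw [h6]
end
end

section
/- Let K be a field, Y = (Y_1,…,Y_s) a tuple of variables, ρ an integer with 0 < ρ ≤ s, and D_1,…,D_ρ ≥ 1 integers. Let Q_{D_1}(Λ_1,Y),…,Q_{D_ρ}(Λ_ρ,Y) be the generic polynomials of degrees D_1,…,D_ρ in pairwise disjoint parameter tuples Λ_1,…,Λ_ρ, and write ΛΛ = (Λ_1,…,Λ_ρ). Then the ideal ⟨Q_{D_1},…,Q_{D_ρ}⟩ of K[ΛΛ,Y] is a prime ideal of height ρ. -/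
open MvPolynomial

noncomputable section

/-- Index constructor. -/
def mkL (s ρ : ℕ) (D : Fin ρ → ℕ) (i : Fin ρ) (m : MonLE s (D i)) : LamIdx s ρ D := ⟨i, m⟩

/-- The `i`-th generic polynomial. -/
def gP (K : Type) [Field K] (s ρ : ℕ) (D : Fin ρ → ℕ) (i : Fin ρ) :
    MvPolynomial (Fin s) (MvPolynomial (LamIdx s ρ D) K) :=
  genPoly K s (D i) (mkL s ρ D i)

/-- The underlying exponent. -/
def mVal {s d : ℕ} (m : MonLE s d) : Fin s →₀ ℕ := m.1

/-- The constant monomial. -/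
def mon0 (s d : ℕ) : MonLE s d := ⟨0, by simp⟩

lemma mVal_iff {s d : ℕ} (m : MonLE s d) : m = mon0 s d ↔ mVal m = 0 := Subtype.ext_iff

lemma gP_eq (K : Type) [Field K] (s ρ : ℕ) (D : Fin ρ → ℕ) (i : Fin ρ) :
    gP K s ρ D i = ∑ m, monomial (mVal m) (X (mkL s ρ D i m)) := rfl

open Classical in
/-- The images of the parameters: the constant coefficient of the `i`-th polynomial, `i ∈ J`,
is replaced by minus the rest of that polynomial. -/
def subFun (K : Type) [Field K] (s ρ : ℕ) (D : Fin ρ → ℕ) (J : Set (Fin ρ))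
    (l : LamIdx s ρ D) : MvPolynomial (Fin s) (MvPolynomial (LamIdx s ρ D) K) :=
  C (X l) - if l.1 ∈ J ∧ mVal l.2 = 0 then gP K s ρ D l.1 else 0

/-- The substitution homomorphism. -/
def subHom (K : Type) [Field K] (s ρ : ℕ) (D : Fin ρ → ℕ) (J : Set (Fin ρ)) :
    MvPolynomial (Fin s) (MvPolynomial (LamIdx s ρ D) K) →+*
      MvPolynomial (Fin s) (MvPolynomial (LamIdx s ρ D) K) :=
  eval₂Hom (eval₂Hom (C.comp C) (subFun K s ρ D J)) X

open Classical in
lemma subHom_gP (K : Type) [Field K] (s ρ : ℕ) (D : Fin ρ → ℕ) (J : Set (Fin ρ)) (i : Fin ρ) :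
    subHom K s ρ D J (gP K s ρ D i) = if i ∈ J then 0 else gP K s ρ D i := by
  have h1 : ∀ m : MonLE s (D i), subHom K s ρ D J
      (monomial (mVal m) (X (mkL s ρ D i m))) =
      monomial (mVal m) (X (mkL s ρ D i m)) -
        if m = mon0 s (D i) then (if i ∈ J then gP K s ρ D i else 0) else 0 := by
    intro m
    have hX : ((mVal m).prod fun n e => (X n : MvPolynomial (Fin s)
        (MvPolynomial (LamIdx s ρ D) K)) ^ e) = monomial (mVal m) 1 := by
      rw [monomial_eq]; simp
    have h0 : m = mon0 s (D i) ↔ (mVal m) = 0 := mVal_iff m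
    simp only [subHom, coe_eval₂Hom, eval₂_monomial, eval₂_X, subFun, hX, h0]
    change (C (X (mkL s ρ D i m)) - if i ∈ J ∧ (mVal m) = 0 then gP K s ρ D i else 0) * _ = _
    rw [sub_mul, C_mul_monomial, mul_one]
    by_cases hm : (mVal m) = 0 <;> by_cases hi : i ∈ J <;> simp [hm, hi]
  have h2 : subHom K s ρ D J (gP K s ρ D i) = gP K s ρ D i - if i ∈ J then gP K s ρ D i else 0 := by
    conv_lhs => rw [gP_eq, map_sum]
    rw [Finset.sum_congr rfl (fun m _ => h1 m), Finset.sum_sub_distrib, Finset.sum_ite_eq']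
    simp [gP_eq]
  rw [h2]; split_ifs <;> simp

lemma sub_subHom_mem (K : Type) [Field K] (s ρ : ℕ) (D : Fin ρ → ℕ) (J : Set (Fin ρ))
    (r : MvPolynomial (Fin s) (MvPolynomial (LamIdx s ρ D) K)) :
    r - subHom K s ρ D J r ∈ Ideal.span (gP K s ρ D '' J) := by
  have key : (Ideal.Quotient.mk (Ideal.span (gP K s ρ D '' J))).comp (subHom K s ρ D J) =
      Ideal.Quotient.mk (Ideal.span (gP K s ρ D '' J)) := by
    apply MvPolynomial.ringHom_ext'
    · apply MvPolynomial.ringHom_ext'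
      · ext a; simp [subHom]
      · intro l
        simp only [subHom, subFun, RingHom.comp_apply, coe_eval₂Hom, eval₂_C, eval₂_X, map_sub]
        rw [sub_eq_self, Ideal.Quotient.eq_zero_iff_mem]
        split_ifs with h
        · exact Ideal.subset_span ⟨_, h.1, rfl⟩
        · exact zero_mem _
    · intro j; simp [subHom]
  rw [← Ideal.Quotient.eq]
  exact (RingHom.congr_fun key r).symm

lemma span_eq_ker (K : Type) [Field K] (s ρ : ℕ) (D : Fin ρ → ℕ) (J : Set (Fin ρ)) :
    Ideal.span (gP K s ρ D '' J) = RingHom.ker (subHom K s ρ D J) := by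
  apply le_antisymm
  · rw [Ideal.span_le]
    rintro _ ⟨i, hi, rfl⟩
    simp [RingHom.mem_ker, subHom_gP, hi]
  · intro r hr
    have := sub_subHom_mem K s ρ D J r
    rwa [(RingHom.mem_ker).1 hr, sub_zero] at this

lemma span_isPrime (K : Type) [Field K] (s ρ : ℕ) (D : Fin ρ → ℕ) (J : Set (Fin ρ)) :
    (Ideal.span (gP K s ρ D '' J)).IsPrime := by
  rw [span_eq_ker]; exact RingHom.ker_isPrime _

lemma gP_ne_zero (K : Type) [Field K] (s ρ : ℕ) (D : Fin ρ → ℕ) (i : Fin ρ) :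
    gP K s ρ D i ≠ 0 := by
  classical
  intro h
  have h1 : coeff 0 (gP K s ρ D i) = X (mkL s ρ D i (mon0 s (D i))) := by
    rw [gP_eq, coeff_sum, Finset.sum_eq_single (mon0 s (D i))]
    · rw [coeff_monomial, if_pos ((mVal_iff _).1 rfl)]
    · intro b _ hb
      rw [coeff_monomial, if_neg]
      intro h'; exact hb ((mVal_iff b).2 h')
    · simp
  rw [h, coeff_zero] at h1
  exact X_ne_zero _ h1.symm

lemma le_height (K : Type) [Field K] (s ρ : ℕ) (D : Fin ρ → ℕ) (k : ℕ) (hk : k ≤ ρ) :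
    (k : ℕ∞) ≤ (Ideal.span (gP K s ρ D '' {i | i.1 < k})).height := by
  classical
  induction k with
  | zero => simp
  | succ k ih =>
    have := span_isPrime K s ρ D {i | i.1 < k}
    have := span_isPrime K s ρ D {i | i.1 < k + 1}
    have hlt : Ideal.span (gP K s ρ D '' {i | i.1 < k}) <
        Ideal.span (gP K s ρ D '' {i | i.1 < k + 1}) := by
      refine lt_of_le_not_ge (Ideal.span_mono (Set.image_mono ?_)) ?_
      · intro i (hi : i.1 < k); exact Nat.lt_succ_of_lt hi
      · intro hle
        have hmem : gP K s ρ D ⟨k, hk⟩ ∈ Ideal.span (gP K s ρ D '' {i | i.1 < k}) :=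
          hle (Ideal.subset_span ⟨_, Nat.lt_succ_self k, rfl⟩)
        rw [span_eq_ker, RingHom.mem_ker, subHom_gP, if_neg (by simp)] at hmem
        exact gP_ne_zero K s ρ D _ hmem
    have h := Ideal.height_add_one_le_of_lt_of_isPrime hlt
    refine le_trans ?_ h
    push_cast
    gcongr
    exact ih (by omega)

lemma idealHeight_eq {R : Type} [CommRing R] (I : Ideal R) (hI : I.IsPrime) :
    idealHeight I = I.height := by
  rw [show I.height = Order.height (⟨I, hI⟩ : PrimeSpectrum R) from
    PrimeSpectrum.height_eq_orderHeight ⟨I, hI⟩]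
  apply le_antisymm
  · exact iInf_le_of_le ⟨⟨I, hI⟩, le_rfl⟩ le_rfl
  · exact le_iInf fun p => Order.height_mono p.2

instance (s ρ : ℕ) (D : Fin ρ → ℕ) : Finite (LamIdx s ρ D) := by
  unfold LamIdx; infer_instance

lemma main_aux_s13 (K : Type) [Field K] (s ρ : ℕ) (D : Fin ρ → ℕ) :
    (Ideal.span (Set.range (gP K s ρ D))).IsPrime ∧
    idealHeight (Ideal.span (Set.range (gP K s ρ D))) = (ρ : ℕ∞) := by
  have hr : Set.range (gP K s ρ D) = gP K s ρ D '' {i | i.1 < ρ} := by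
    have : {i : Fin ρ | i.1 < ρ} = Set.univ := by ext i; simp
    rw [this, Set.image_univ]
  have hp := span_isPrime K s ρ D {i | i.1 < ρ}
  rw [hr]
  refine ⟨hp, ?_⟩
  rw [idealHeight_eq _ hp]
  refine le_antisymm ?_ (le_height K s ρ D ρ le_rfl)
  rw [← hr]
  rw [← hr] at hp
  have h1 := Ideal.height_le_spanRank_toENat _ hp.ne_top
  refine h1.trans ?_
  have h2 := (Submodule.spanRank_span_le_card (R := MvPolynomial (Fin s)
    (MvPolynomial (LamIdx s ρ D) K)) (Set.range (gP K s ρ D))).trans Cardinal.mk_range_le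
  have h3 := Cardinal.toENat.monotone' h2
  simpa using h3

/-- For `0 < ρ ≤ s` and `D_i ≥ 1`, the ideal
`⟨Q_{D_1},…,Q_{D_ρ}⟩ ⊆ K[ΛΛ,Y]` generated by the `ρ` generic polynomials (in pairwise
disjoint parameter tuples) is prime of height `ρ`. -/
theorem stmt_13 (K : Type) [Field K] (s ρ : ℕ) (hρ0 : 0 < ρ) (hρs : ρ ≤ s)
    (D : Fin ρ → ℕ) (hD : ∀ i, 1 ≤ D i) :
    (Ideal.span (Set.range fun i : Fin ρ =>
      genPoly K s (D i) (fun mo => (⟨i, mo⟩ : LamIdx s ρ D)))).IsPrime ∧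
    idealHeight (Ideal.span (Set.range fun i : Fin ρ =>
      genPoly K s (D i) (fun mo => (⟨i, mo⟩ : LamIdx s ρ D)))) = (ρ : ℕ∞) := by
  exact main_aux_s13 K s ρ D
end
end

section
/- Let K be a Hilbertian field of characteristic 0 and P(T,Y) ∈ K[T,Y] an irreducible polynomial in one variable T and an s-tuple of variables Y, with deg_Y P ≥ 1 (i.e. P ∉ K[T]). Fix an integer D ≥ 0. Then the set of polynomials U(Y) ∈ K[Y] of total degree ≤ D such that P(U(Y),Y) is irreducible in K[Y] is Zariski-dense in the space K[Y]_D of polynomials of total degree ≤ D, identified with K^{N_D} via coefficients. -/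
open MvPolynomial

noncomputable section

/-- Multivariate Gauss lemma for prime polynomials. -/
lemma irreducible_map_frac {R : Type} [CommRing R] [IsDomain R] {s : ℕ}
    (F : MvPolynomial (Fin s) R) (hF : Prime F) (hc : ∀ c : R, F ≠ C c) :
    Irreducible (MvPolynomial.map (algebraMap R (FractionRing R)) F) := by
  have hinj : Function.Injective (MvPolynomial.map (σ := Fin s) (algebraMap R (FractionRing R))) :=
    MvPolynomial.map_injective _ (IsFractionRing.injective R (FractionRing R))
  have h1 : (Ideal.span {F}).IsPrime := (Ideal.span_singleton_prime hF.ne_zero).2 hF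
  have h2 : Disjoint (((nonZeroDivisors R).map (C : R →+* MvPolynomial (Fin s) R) :
      Submonoid (MvPolynomial (Fin s) R)) : Set (MvPolynomial (Fin s) R))
      (Ideal.span {F} : Ideal (MvPolynomial (Fin s) R)) := by
    rw [Set.disjoint_left]
    rintro _ ⟨c, hcn, rfl⟩ hmem
    have hc0 : c ≠ 0 := nonZeroDivisors.ne_zero hcn
    obtain ⟨G, hG⟩ := Ideal.mem_span_singleton.1 hmem
    have hCc : (C c : MvPolynomial (Fin s) R) ≠ 0 := by simpa using hc0
    have hG' : C c = F * G := hG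
    have hG0 : G ≠ 0 := by rintro rfl; simp [hc0] at hG'
    have hd := MvPolynomial.totalDegree_mul_of_isDomain hF.ne_zero hG0
    rw [← hG', totalDegree_C] at hd
    exact hc _ (totalDegree_eq_zero_iff_eq_C.1 (by omega : F.totalDegree = 0))
  letI : Algebra (MvPolynomial (Fin s) R) (MvPolynomial (Fin s) (FractionRing R)) :=
    MvPolynomial.algebraMvPolynomial
  have h3 := IsLocalization.isPrime_of_isPrime_disjoint
    ((nonZeroDivisors R).map (C : R →+* MvPolynomial (Fin s) R))
    (MvPolynomial (Fin s) (FractionRing R)) _ h1 h2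
  rw [Ideal.map_span, Set.image_singleton] at h3
  have h4 : algebraMap (MvPolynomial (Fin s) R) (MvPolynomial (Fin s) (FractionRing R)) F
      = MvPolynomial.map (algebraMap R (FractionRing R)) F := rfl
  rw [h4] at h3
  exact ((Ideal.span_singleton_prime
    ((map_ne_zero_iff _ hinj).2 hF.ne_zero)).1 h3).irreducible

/-- Shift of one variable by a polynomial not involving it. -/
def shiftHom (K : Type) [Field K] {σ : Type} [DecidableEq σ] (i : σ) (Q : MvPolynomial σ K) :
    MvPolynomial σ K →ₐ[K] MvPolynomial σ K :=
  aeval (fun j => if j = i then X i + Q else X j)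

/-- The shift as an automorphism. -/
def shiftEquiv (K : Type) [Field K] {σ : Type} [DecidableEq σ] (i : σ) (Q : MvPolynomial σ K)
    (h : shiftHom K i Q Q = Q) (h' : shiftHom K i (-Q) Q = Q) :
    MvPolynomial σ K ≃ₐ[K] MvPolynomial σ K :=
  AlgEquiv.ofAlgHom (shiftHom K i Q) (shiftHom K i (-Q))
    (by
      ext1 j
      by_cases hj : j = i
      · subst hj
        have e : shiftHom K j (-Q) (X j) = X j + -Q := by simp [shiftHom]
        rw [AlgHom.comp_apply, e, map_add, map_neg, h]
        simp [shiftHom]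
      · simp [shiftHom, hj])
    (by
      ext1 j
      by_cases hj : j = i
      · subst hj
        have e : shiftHom K j Q (X j) = X j + Q := by simp [shiftHom]
        rw [AlgHom.comp_apply, e, map_add, h']
        simp [shiftHom]
      · simp [shiftHom, hj])

/-- The generic substitution `P(∑ Λ_m Y^m, Y)`. -/
def genSubst (K : Type) [Field K] (s D r : ℕ) (v : MonLE s D → Fin r) :
    MvPolynomial (Fin 1 ⊕ Fin s) K →ₐ[K] MvPolynomial (Fin s) (MvPolynomial (Fin r) K) :=
  aeval (Sum.elim (fun _ => genPoly K s D v) (fun j => X j))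

lemma map_genSubst (K : Type) [Field K] (s D r : ℕ) (v : MonLE s D → Fin r) (t : Fin r → K)
    (P : MvPolynomial (Fin 1 ⊕ Fin s) K) :
    MvPolynomial.map (MvPolynomial.eval t) (genSubst K s D r v P)
      = polySubstHom K (fun _ : Fin 1 => genPolyAt K s D (fun m => t (v m))) P := by
  have : (MvPolynomial.map (MvPolynomial.eval t)).comp (genSubst K s D r v).toRingHom
      = polySubstHom K (fun _ : Fin 1 => genPolyAt K s D (fun m => t (v m))) := by
    apply MvPolynomial.ringHom_ext
    · intro c
      simp [genSubst, polySubstHom, MvPolynomial.algebraMap_eq, MvPolynomial.algebraMap_apply]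
    · rintro (i | j)
      · simp [genSubst, polySubstHom, genPoly, genPolyAt, map_sum]
      · simp [genSubst, polySubstHom]
  exact congrArg (fun f => f P) this

lemma genSubst_ne_C (K : Type) [Field K] (s D r : ℕ) (v : MonLE s D → Fin r)
    (hv : Function.Injective v) (P : MvPolynomial (Fin 1 ⊕ Fin s) K)
    (hPY : ¬ ∃ q : MvPolynomial (Fin 1) K, P = MvPolynomial.rename Sum.inl q)
    (c : MvPolynomial (Fin r) K) : genSubst K s D r v P ≠ C c := by
  classical
  intro h
  let a : MvPolynomial (Fin r) K →ₐ[K] MvPolynomial (Fin 1) K :=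
    aeval (fun i => if i = v (monZero s D) then X 0 else 0)
  let ψ : MvPolynomial (Fin s) (MvPolynomial (Fin r) K) →+* MvPolynomial (Fin 1 ⊕ Fin s) K :=
    eval₂Hom ((rename Sum.inl).comp a : MvPolynomial (Fin r) K →ₐ[K] _).toRingHom
      (fun j => X (Sum.inr j))
  have hψ : ψ.comp (genSubst K s D r v).toRingHom = RingHom.id _ := by
    apply MvPolynomial.ringHom_ext
    · intro c
      simp [genSubst, ψ, MvPolynomial.algebraMap_eq, MvPolynomial.algebraMap_apply]
    · rintro (i | j)
      · simp only [genSubst, ψ, genPoly, RingHom.comp_apply, AlgHom.toRingHom_eq_coe,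
          RingHom.coe_coe, aeval_X, Sum.elim_inl, map_sum, RingHom.id_apply, coe_eval₂Hom,
          eval₂_monomial]
        rw [Finset.sum_eq_single (monZero s D)]
        · have : i = 0 := Subsingleton.elim _ _
          simp [a, monZero, this]
        · intro m _ hm
          have : v m ≠ v (monZero s D) := fun h => hm (hv h)
          simp [a, this]
        · simp
      · simp [genSubst, ψ]
  have h1 : ψ (genSubst K s D r v P) = P := congrArg (fun f => f P) hψ
  apply hPY
  refine ⟨a c, ?_⟩
  rw [← h1, h]
  simp [ψ]

lemma genSubst_prime (K : Type) [Field K] (s D r : ℕ) (v : MonLE s D → Fin r)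
    (hv : Function.Injective v) (P : MvPolynomial (Fin 1 ⊕ Fin s) K) (hP : Irreducible P) :
    Prime (genSubst K s D r v P) := by
  classical
  let z : Fin s ⊕ Fin r := Sum.inr (v (monZero s D))
  let Q : MvPolynomial (Fin s ⊕ Fin r) K :=
    ∑ m ∈ Finset.univ.erase (monZero s D),
      X (Sum.inr (v m)) * rename Sum.inl (monomial m.1 (1 : K))
  have key : ∀ Q', shiftHom K z Q' Q = Q := by
    intro Q'
    simp only [Q, map_sum, map_mul]
    refine Finset.sum_congr rfl fun m hm => ?_
    have hm' : v m ≠ v (monZero s D) := fun h => (Finset.mem_erase.1 hm).1 (hv h)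
    congr 1
    · simp [shiftHom, z, hm']
    · have : (shiftHom K z Q').comp (rename Sum.inl) = (rename Sum.inl : MvPolynomial (Fin s) K →ₐ[K] _) := by
        ext1 j
        simp [shiftHom, z]
      exact congrArg (fun f => f (monomial m.1 (1 : K))) this
  let e := shiftEquiv K z Q (key _) (key _)
  let f : Fin 1 ⊕ Fin s → Fin s ⊕ Fin r := Sum.elim (fun _ => z) Sum.inl
  have hf : Function.Injective f := by
    rintro (i | i) (j | j) h
    · exact congrArg _ (Subsingleton.elim _ _)
    · simp [f, z] at h
    · simp [f, z] at h
    · simpa [f] using h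
  have hfac : genSubst K s D r v P = sumAlgEquiv K (Fin s) (Fin r) (e (rename f P)) := by
    have : genSubst K s D r v = (((sumAlgEquiv K (Fin s) (Fin r)).toAlgHom.comp e.toAlgHom).comp
        (rename f)) := by
      ext1 j
      rcases j with i | j
      · have : e (X z) = X z + Q := by simp [e, shiftEquiv, shiftHom]
        have hl : genSubst K s D r v (X (Sum.inl i)) = genPoly K s D v := by simp [genSubst]
        have hR : sumAlgEquiv K (Fin s) (Fin r) (e (rename f (X (Sum.inl i)))) =
            genPoly K s D v := by
          have h0 : rename f (X (Sum.inl i) : MvPolynomial (Fin 1 ⊕ Fin s) K) = X z := by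
            simp [f]
          have hr : ∀ u : MvPolynomial (Fin s) K, sumAlgEquiv K (Fin s) (Fin r)
              (rename Sum.inl u) = MvPolynomial.map C u := by
            intro u
            have : (sumAlgEquiv K (Fin s) (Fin r)).toAlgHom.toRingHom.comp
                (rename Sum.inl : MvPolynomial (Fin s) K →ₐ[K] _).toRingHom
                = MvPolynomial.map C := by
              apply MvPolynomial.ringHom_ext
              · intro c
                have := (sumAlgEquiv K (Fin s) (Fin r)).commutes c
                simpa [MvPolynomial.algebraMap_eq, MvPolynomial.algebraMap_apply] using this
              · intro j
                simp [sumAlgEquiv_X_inl]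
            exact congrArg (fun f => f u) this
          rw [h0, this, genPoly,
            ← Finset.add_sum_erase Finset.univ _ (Finset.mem_univ (monZero s D)), map_add]
          congr 1
          · rw [sumAlgEquiv_X_inr]
            rfl
          · simp only [Q, map_sum, map_mul, sumAlgEquiv_X_inr, hr, map_monomial, map_one,
              C_mul_monomial, mul_one]
        exact hl.trans hR.symm
      · have : e (X (Sum.inl j)) = X (Sum.inl j) := by simp [e, shiftEquiv, shiftHom, z]
        simp [f, genSubst, this, sumAlgEquiv_X_inl]
    rw [this]; rfl
  rw [hfac]
  have h1 : Prime (rename f P) := by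
    have h2 : Prime (renameEquiv K (Equiv.ofInjective f hf) P) :=
      (MulEquiv.prime_iff (renameEquiv K (Equiv.ofInjective f hf)).toMulEquiv).2 hP.prime
    have h3 := (prime_rename_iff (Set.range f)).2 h2
    rw [renameEquiv_apply, rename_rename] at h3
    exact h3
  exact (MulEquiv.prime_iff (sumAlgEquiv K (Fin s) (Fin r)).toMulEquiv).2 ((MulEquiv.prime_iff e.toMulEquiv).2 h1)

/-- (Schinzel hypothesis for `K[Y]`.) `K` Hilbertian of characteristic
`0`, `P(T,Y) ∈ K[T,Y]` irreducible with `deg_Y P ≥ 1` (i.e. `P ∉ K[T]`), `D ≥ 0`.  The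
set of polynomials `U(Y) ∈ K[Y]_D` such that `P(U(Y),Y)` is irreducible in `K[Y]` is
Zariski-dense in `K[Y]_D ≅ K^{N_D}`. -/
theorem stmt_14 (K : Type) [Field K] [CharZero K] (hK : IsHilbertianField K)
    (s : ℕ) (P : MvPolynomial (Fin 1 ⊕ Fin s) K)
    (hPirr : Irreducible P)
    (hPY : ¬ ∃ q : MvPolynomial (Fin 1) K, P = MvPolynomial.rename Sum.inl q)
    (D : ℕ) :
    IsZariskiDense K {U : MonLE s D → K |
      Irreducible (polySubstHom K (fun _ : Fin 1 => genPolyAt K s D U) P)} := by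
  classical
  intro g hg
  let v := Fintype.equivFin (MonLE s D)
  set r := Fintype.card (MonLE s D) with hr
  have hr0 : 0 < r := Fintype.card_pos_iff.2 ⟨monZero s D⟩
  let F := genSubst K s D r v P
  let p := MvPolynomial.map (algebraMap (MvPolynomial (Fin r) K) (RatFuncField K (Fin r))) F
  have hp : Irreducible p := irreducible_map_frac F
    (genSubst_prime K s D r v v.injective P hPirr)
    (genSubst_ne_C K s D r v v.injective P hPY)
  obtain ⟨t, ht, hgt⟩ := hK r hr0 _ ⟨s, 1, 1, fun _ => p, fun _ => 1, fun _ => hp,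
    ⟨fun _ => 0, 0, by simp⟩, rfl⟩ (rename v g)
    ((map_ne_zero_iff _ (rename_injective _ v.injective)).2 hg)
  obtain ⟨q, hq, hqi⟩ := ht.2 0
  refine ⟨fun m => t (v m), ?_, ?_⟩
  · have : q = MvPolynomial.map (MvPolynomial.eval t) F := by
      ext mono
      obtain ⟨a, b, hb, h1, h2⟩ := hq mono
      rw [coeff_map] at h1 ⊢
      rw [← map_mul] at h1
      have h3 := IsFractionRing.injective (MvPolynomial (Fin r) K) (RatFuncField K (Fin r)) h1
      rw [← h3, map_mul] at h2
      exact mul_left_cancel₀ hb h2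
    rw [this, map_genSubst] at hqi
    exact hqi
  · rw [eval_rename] at hgt
    exact hgt
end
end

section
/- Let K be a field, p a prime ideal of K[Y], and Q_{S,R}(Λ,Y) a quasi-generic polynomial of base (S,R). Then the ideal generated by p and Q_{S,R} in K[Λ,Y] is a prime ideal. -/
open MvPolynomial

noncomputable section

/-- (First step of the key lemma.) For any prime ideal `p ⊆ K[Y]` and
any quasi-generic polynomial `Q_{S,R}(Λ,Y)` of base `(S,R)`, the ideal `⟨p, Q_{S,R}⟩` of
`K[Λ,Y]` is prime. -/
theorem stmt_15 (K : Type) [Field K] (s n D : ℕ)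
    (m : Fin (n + 1) → (Fin s →₀ ℕ)) (hdeg : ∀ i, (m i).degree ≤ D)
    (hm0 : m 0 = 0) (hminj : Function.Injective m)
    (R : MvPolynomial (Fin s) K)
    (p : Ideal (MvPolynomial (Fin s) K)) (hp : p.IsPrime) :
    (Ideal.map (MvPolynomial.map (MvPolynomial.C : K →+* MvPolynomial (Fin (n + 1)) K)) p ⊔
      Ideal.span {quasiGen K m R}).IsPrime := by
  set I := (Ideal.map (MvPolynomial.map (MvPolynomial.C : K →+* MvPolynomial (Fin (n + 1)) K)) p ⊔
      Ideal.span {quasiGen K m R}) with hI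
  let A := MvPolynomial (Fin s) K ⧸ p
  -- the embedding of `K[Y]` into `A[Λ_1, ..., Λ_n]`
  let c : MvPolynomial (Fin s) K →+* MvPolynomial (Fin n) A :=
    (MvPolynomial.C).comp (Ideal.Quotient.mk p)
  let w : MvPolynomial (Fin n) A :=
    -((∑ i : Fin n, MvPolynomial.X i * c (monomial (m i.succ) 1)) + c R)
  let e : MvPolynomial (Fin (n + 1)) K →+* MvPolynomial (Fin n) A :=
    MvPolynomial.eval₂Hom (c.comp MvPolynomial.C) (Fin.cons w MvPolynomial.X)
  let f : MvPolynomial (Fin s) (MvPolynomial (Fin (n + 1)) K) →+* MvPolynomial (Fin n) A :=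
    MvPolynomial.eval₂Hom e (fun j => c (X j))
  let d : MvPolynomial (Fin s) K →+* MvPolynomial (Fin s) (MvPolynomial (Fin (n + 1)) K) :=
    MvPolynomial.map MvPolynomial.C
  have hfd : f.comp d = c := by
    apply MvPolynomial.ringHom_ext
    · intro a; simp [f, d, e]
    · intro j; simp [f, d]
  have hfd' : ∀ x, f (d x) = c x := fun x => by rw [← hfd]; rfl
  have hmon : ∀ i, (monomial (m i) (X i : MvPolynomial (Fin (n + 1)) K) :
      MvPolynomial (Fin s) (MvPolynomial (Fin (n + 1)) K)) = C (X i) * d (monomial (m i) 1) := by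
    intro i
    simp [d, MvPolynomial.map_monomial, MvPolynomial.C_mul_monomial]
  have hQ : quasiGen K m R = C (X 0) +
      ((∑ i : Fin n, C (X i.succ) * d (monomial (m i.succ) 1)) + d R) := by
    unfold quasiGen
    rw [Fin.sum_univ_succ, hmon 0, hm0]
    simp only [hmon]
    have : d (monomial 0 1) = 1 := map_one d
    rw [this, mul_one, add_assoc]
  have hf0 : f (C (X 0)) = w := by simp [f, e]
  have hfs : ∀ i : Fin n, f (C (X i.succ)) = X i := by intro i; simp [f, e]
  have hfQ : f (quasiGen K m R) = 0 := by
    rw [hQ]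
    simp only [map_add, map_sum, map_mul, hf0, hfs, hfd']
    simp [w]
  have hle : I ≤ RingHom.ker f := by
    rw [hI, sup_le_iff, Ideal.map_le_iff_le_comap, Ideal.span_singleton_le_iff_mem]
    refine ⟨fun x hx => ?_, hfQ⟩
    change f (d x) = 0
    rw [hfd']
    simp [c, Ideal.Quotient.eq_zero_iff_mem.mpr hx]
  let q := Ideal.Quotient.mk I
  let g₀ : A →+* (MvPolynomial (Fin s) (MvPolynomial (Fin (n + 1)) K) ⧸ I) :=
    Ideal.Quotient.lift p (q.comp d) (fun x hx => Ideal.Quotient.eq_zero_iff_mem.mpr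
      (Ideal.mem_sup_left (Ideal.mem_map_of_mem _ hx)))
  let g : MvPolynomial (Fin n) A →+* (MvPolynomial (Fin s) (MvPolynomial (Fin (n + 1)) K) ⧸ I) :=
    MvPolynomial.eval₂Hom g₀ (fun i => q (C (X i.succ)))
  have hgc : ∀ x, g (c x) = q (d x) := by
    intro x; simp only [g, c, RingHom.comp_apply, coe_eval₂Hom, eval₂_C]; rfl
  have hgX : ∀ i, g (X i) = q (C (X i.succ)) := by intro i; simp [g]
  have hqQ : q (quasiGen K m R) = 0 := Ideal.Quotient.eq_zero_iff_mem.mpr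
    (Ideal.mem_sup_right (Ideal.mem_span_singleton_self _))
  have hgw : g w = q (C (X 0)) := by
    rw [hQ] at hqQ
    simp only [map_add, map_sum, map_mul] at hqQ
    simp only [w, map_neg, map_add, map_sum, map_mul, hgc, hgX]
    exact (eq_neg_of_add_eq_zero_left hqQ).symm
  have hgf : g.comp f = q := by
    apply MvPolynomial.ringHom_ext
    · intro a
      change ((g.comp f).comp C) a = (q.comp C) a
      congr 1
      apply MvPolynomial.ringHom_ext
      · intro k
        have h := hgc (C k)
        rw [← hfd'] at h
        simpa [d] using h
      · intro i
        refine Fin.cases ?_ (fun i => ?_) i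
        · simp only [RingHom.comp_apply, hf0, hgw]
        · simp only [RingHom.comp_apply, hfs, hgX]
    · intro j
      have h := hgc (X j)
      rw [← hfd'] at h
      simpa [d] using h
  have hker : I = RingHom.ker f := by
    refine le_antisymm hle (fun x hx => ?_)
    rw [← Ideal.Quotient.eq_zero_iff_mem]
    change q x = 0
    rw [← hgf, RingHom.comp_apply, (RingHom.mem_ker).mp hx, map_zero]
  rw [hker]
  haveI : IsDomain A := Ideal.Quotient.isDomain p
  exact RingHom.ker_isPrime f
end
end

section
/- Let K be a field, p a prime ideal of K[Y], and Q_{S,R}(Λ,Y) a quasi-generic polynomial of base (S,R) such that the triple (p,S,R) satisfies hypothesis (H). Let p̃_Λ be the extension of p to K(Λ)[Y] and B_Λ = K(Λ)[Y]/p̃_Λ. Then the image of Q_{S,R} in B_Λ is not an invertible element of B_Λ. -/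
open MvPolynomial

noncomputable section

open MvPolynomial in
/-- Substituting `X ↦ θ` with constant term of `θ` transcendental, `Λ' ↦ Λ'`, is injective. -/
lemma subst_injective {K B : Type} [Field K] [CommRing B] [Algebra K B] {n : ℕ}
    (θ : MvPolynomial (Fin n) B) (h : Transcendental K (constantCoeff θ)) :
    Function.Injective (eval₂Hom (Polynomial.aeval θ : Polynomial K →ₐ[K] _).toRingHom
      (X : Fin n → MvPolynomial (Fin n) B)) := by
  rw [injective_iff_map_eq_zero]
  intro g hg
  by_contra hne
  obtain ⟨α, hα, hmin⟩ := Finset.exists_min_image g.support (fun β => β.degree)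
    (by rwa [Finset.nonempty_iff_ne_empty, Ne, MvPolynomial.support_eq_empty])
  have h1 := congrArg (coeff α) hg
  rw [coe_eval₂Hom, eval₂_eq', coeff_sum, coeff_zero, Finset.sum_eq_single α] at h1
  · have e : (∏ i, (X i : MvPolynomial (Fin n) B) ^ α i) = monomial α 1 := by
      rw [monomial_eq, C_1, one_mul, Finsupp.prod_fintype _ _ (by simp)]
    rw [e, coeff_mul_monomial', if_pos le_rfl, tsub_self, mul_one] at h1
    have h2 : Polynomial.aeval (constantCoeff θ) (coeff α g) = 0 := by
      rw [← h1]
      have := Polynomial.hom_eval₂ (coeff α g) (algebraMap K (MvPolynomial (Fin n) B))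
        (constantCoeff (R := B) (σ := Fin n)) θ
      rw [Polynomial.aeval_def]
      refine Eq.trans ?_ this.symm
      congr 1
      ext x
      rw [RingHom.comp_apply, MvPolynomial.algebraMap_apply,
        constantCoeff_C]
    have h3 := (transcendental_iff.1 h) _ h2
    exact (mem_support_iff.1 hα) h3
  · intro β hβ hβα
    have e : (∏ i, (X i : MvPolynomial (Fin n) B) ^ β i) = monomial β 1 := by
      rw [monomial_eq, C_1, one_mul, Finsupp.prod_fintype _ _ (by simp)]
    rw [e, coeff_mul_monomial', if_neg]
    intro hle
    apply hβα
    have hd := hmin β hβ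
    obtain ⟨γ, rfl⟩ := exists_add_of_le hle
    have : γ.degree = 0 := by
      simp only [map_add] at hd
      omega
    rw [Finsupp.degree_eq_zero_iff] at this
    simp [this]
  · intro h; exact absurd hα h

open MvPolynomial in
/-- The point-shifting substitution `K[Λ] → K[X][Λ']` is injective. -/
lemma shift_injective {K : Type} [Field K] {n : ℕ} (a : Fin (n + 1) → K) :
    Function.Injective (aeval (Fin.cons (C Polynomial.X)
      (fun i => X i + C (Polynomial.C (a i.succ)))) :
      MvPolynomial (Fin (n + 1)) K →ₐ[K] MvPolynomial (Fin n) (Polynomial K)) := by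
  let ρ : MvPolynomial (Fin n) (Polynomial K) →+* MvPolynomial (Fin (n + 1)) K :=
    eval₂Hom (Polynomial.aeval (X 0) : Polynomial K →ₐ[K] _).toRingHom
      (fun i => X i.succ - C (a i.succ))
  apply Function.LeftInverse.injective (g := ρ)
  intro x
  have : ρ.comp (aeval (Fin.cons (C Polynomial.X)
      (fun i => X i + C (Polynomial.C (a i.succ)))) :
      MvPolynomial (Fin (n + 1)) K →ₐ[K] MvPolynomial (Fin n) (Polynomial K)).toRingHom
      = RingHom.id _ := by
    apply MvPolynomial.ringHom_ext
    · intro r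
      simp [ρ, MvPolynomial.algebraMap_apply, MvPolynomial.algebraMap_eq]
    · intro i
      refine Fin.cases ?_ (fun j => ?_) i
      · simp [ρ]
      · simp [ρ, MvPolynomial.algebraMap_eq]
  exact congrArg (fun f => f x) this

/-- (Second step of the key lemma.) If `(p,S,R)` satisfies hypothesis
(H), then the image of the quasi-generic polynomial `Q_{S,R}` in
`B_Λ = K(Λ)[Y]/p̃_Λ` is not invertible. -/
theorem stmt_16 (K : Type) [Field K] (s n D : ℕ)
    (m : Fin (n + 1) → (Fin s →₀ ℕ)) (hdeg : ∀ i, (m i).degree ≤ D)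
    (hm0 : m 0 = 0) (hminj : Function.Injective m)
    (R : MvPolynomial (Fin s) K)
    (p : Ideal (MvPolynomial (Fin s) K)) (hp : p.IsPrime)
    (hH : HypothesisH K p m R) :
    ¬ IsUnit (Ideal.Quotient.mk
      (Ideal.map (MvPolynomial.map
        ((algebraMap (MvPolynomial (Fin (n + 1)) K) (RatFuncField K (Fin (n + 1)))).comp
          MvPolynomial.C)) p)
      (MvPolynomial.map
        (algebraMap (MvPolynomial (Fin (n + 1)) K) (RatFuncField K (Fin (n + 1))))
        (quasiGen K m R))) := by
  obtain ⟨a, ha⟩ := hH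
  intro hu
  have := hp
  set B := MvPolynomial (Fin s) K ⧸ p with hB
  let q : Fin (n + 1) → B := fun i => Ideal.Quotient.mk p (monomial (m i) 1)
  set r : B := Ideal.Quotient.mk p
    ((∑ i ∈ Finset.univ.erase 0, MvPolynomial.monomial (m i) (a i)) + R) with hr
  have hrt : Transcendental K (-r) := by
    intro h
    apply ha
    rw [mem_integralClosure_iff]
    have h2 : IsIntegral K (-r) := h.isIntegral
    simpa using h2.neg
  let θ : MvPolynomial (Fin n) B := C (-r) - ∑ i : Fin n, X i * C (q i.succ)
  have hθ : constantCoeff θ = -r := by simp [θ]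
  have inj1 := subst_injective (K := K) θ (by rwa [hθ])
  let F := FractionRing (MvPolynomial (Fin n) B)
  let ψ : MvPolynomial (Fin (n + 1)) K →+* F :=
    (algebraMap (MvPolynomial (Fin n) B) F).comp
    ((eval₂Hom (Polynomial.aeval θ : Polynomial K →ₐ[K] _).toRingHom
      (X : Fin n → MvPolynomial (Fin n) B)).comp
      (aeval (Fin.cons (C Polynomial.X)
      (fun i => X i + C (Polynomial.C (a i.succ)))) :
      MvPolynomial (Fin (n + 1)) K →ₐ[K] MvPolynomial (Fin n) (Polynomial K)).toRingHom)
  have hψ : Function.Injective ψ :=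
    (IsFractionRing.injective (MvPolynomial (Fin n) B) F).comp
      (inj1.comp (shift_injective a))
  let Ψ : RatFuncField K (Fin (n + 1)) →+* F := IsFractionRing.lift hψ
  have hΨ : ∀ x, Ψ (algebraMap _ _ x) = ψ x := fun x => IsFractionRing.lift_algebraMap hψ x
  let ι : B →+* F := (algebraMap (MvPolynomial (Fin n) B) F).comp C
  have hψC : ∀ x : K, ψ (C x) = ι (Ideal.Quotient.mk p (C x)) := by
    intro x
    simp only [ψ, ι, RingHom.comp_apply]
    congr 1
    simp [MvPolynomial.algebraMap_apply]
    rfl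
  have hψ0 : ψ (X 0) = algebraMap (MvPolynomial (Fin n) B) F θ := by
    simp [ψ]
  have hψs : ∀ i : Fin n, ψ (X i.succ) = algebraMap (MvPolynomial (Fin n) B) F (X i)
      + ι (Ideal.Quotient.mk p (C (a i.succ))) := by
    intro i
    simp [ψ, ι]
    rfl
  let Φ : MvPolynomial (Fin s) (RatFuncField K (Fin (n + 1))) →+* F :=
    eval₂Hom Ψ (fun j => ι (Ideal.Quotient.mk p (X j)))
  have hΦmap : ∀ f : MvPolynomial (Fin s) K, Φ (MvPolynomial.map
        ((algebraMap (MvPolynomial (Fin (n + 1)) K) (RatFuncField K (Fin (n + 1)))).comp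
          MvPolynomial.C) f) = ι (Ideal.Quotient.mk p f) := by
    intro f
    have : Φ.comp (MvPolynomial.map
        ((algebraMap (MvPolynomial (Fin (n + 1)) K) (RatFuncField K (Fin (n + 1)))).comp
          MvPolynomial.C)) = ι.comp (Ideal.Quotient.mk p) := by
      apply MvPolynomial.ringHom_ext
      · intro x
        simp only [RingHom.comp_apply, map_C, Φ, coe_eval₂Hom, eval₂_C, hΨ, hψC]
      · intro i
        simp [Φ]
    exact congrArg (fun g => g f) this
  have hker : ∀ x ∈ Ideal.map (MvPolynomial.map
        ((algebraMap (MvPolynomial (Fin (n + 1)) K) (RatFuncField K (Fin (n + 1)))).comp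
          MvPolynomial.C)) p, Φ x = 0 := by
    have : Ideal.map (MvPolynomial.map
        ((algebraMap (MvPolynomial (Fin (n + 1)) K) (RatFuncField K (Fin (n + 1)))).comp
          MvPolynomial.C)) p ≤ RingHom.ker Φ := by
      rw [Ideal.map_le_iff_le_comap]
      intro x hx
      rw [Ideal.mem_comap, RingHom.mem_ker, hΦmap, Ideal.Quotient.eq_zero_iff_mem.2 hx, map_zero]
    exact fun x hx => this hx
  have hu2 := hu.map (Ideal.Quotient.lift _ Φ hker)
  rw [Ideal.Quotient.lift_mk] at hu2
  apply hu2.ne_zero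
  have hmon : ∀ i, Φ (MvPolynomial.map
        (algebraMap (MvPolynomial (Fin (n + 1)) K) (RatFuncField K (Fin (n + 1))))
        (monomial (m i) (X i))) = ψ (X i) * ι (q i) := by
    intro i
    have e : (monomial (m i) (X i) : MvPolynomial (Fin s) (MvPolynomial (Fin (n + 1)) K))
      = C (X i) * MvPolynomial.map C (monomial (m i) (1 : K)) := by
      simp [C_mul_monomial]
    rw [e, map_mul, map_mul, map_map, hΦmap, map_C]
    congr 1
    simp only [Φ, coe_eval₂Hom, eval₂_C, hΨ]
  have hq0 : q 0 = 1 := by simp [q, hm0]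
  have hr2 : r = (∑ i : Fin n, Ideal.Quotient.mk p (C (a i.succ)) * q i.succ)
      + Ideal.Quotient.mk p R := by
    have e0 : (Finset.univ : Finset (Fin (n+1))).erase 0 = Finset.univ.image Fin.succ := by
      ext i
      refine Fin.cases ?_ (fun j => ?_) i <;> simp
    rw [hr, e0, Finset.sum_image (Fin.succ_injective n).injOn, map_add, map_sum]
    congr 1
    refine Finset.sum_congr rfl fun i _ => ?_
    rw [← map_mul, C_mul_monomial, mul_one]
  rw [quasiGen, map_add, map_add, map_map, hΦmap, map_sum, map_sum]
  simp only [hmon]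
  rw [Fin.sum_univ_succ, hq0, hψ0]
  simp only [hψs, add_mul, Finset.sum_add_distrib]
  have hθ2 : algebraMap (MvPolynomial (Fin n) B) F θ = - ι r -
      ∑ i : Fin n, algebraMap (MvPolynomial (Fin n) B) F (X i) * ι (q i.succ) := by
    simp only [θ, ι, map_sub, map_neg, map_sum, map_mul, RingHom.comp_apply]
  rw [hθ2, hr2, map_add, map_sum]
  simp only [map_mul, map_one]
  ring
end
end

section
/- Let K be a field and p_T = ⟨P_1,…,P_l⟩ a prime ideal of K[T,Y] with p_T ∩ K[T] = {0}, and let d be the Krull dimension of K(T)[Y]/p̃_T, where p̃_T is the extension of p_T to K(T)[Y]. Then there exists a nonzero polynomial h ∈ K[T] such that for every t ∈ K^r with h(t) ≠ 0: the specialized ideal p_t = ⟨P_1(t,Y),…,P_l(t,Y)⟩ is a proper ideal of K[Y], and every minimal prime ideal q of K[Y] over p_t satisfies that the Krull dimension of K[Y]/q equals d (equivalently, every irreducible component of the zero set of p_t has dimension d). -/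
open MvPolynomial

noncomputable section

theorem aux_dim {R S : Type} [CommRing R] [CommRing S] (f : R →+* S)
    (hinj : Function.Injective f) (hint : f.IsIntegral) : ringKrullDim S = ringKrullDim R := by
  algebraize [f]
  have : FaithfulSMul R S := (faithfulSMul_iff_algebraMap_injective R S).2 hinj
  apply le_antisymm
  · refine Order.krullDim_le_of_strictMono (PrimeSpectrum.comap (algebraMap R S)) ?_
    intro a b hab
    exact Ideal.IsIntegral.comap_lt_comap (R := R) (I := a.asIdeal) (J := b.asIdeal) hab
  · refine iSup_le fun l => ?_
    obtain ⟨Q, hQ1, hQ2⟩ := Ideal.nonempty_primesOver (S := S) (l.head.asIdeal)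
    obtain ⟨L, hL, -⟩ := Ideal.exists_ltSeries_of_hasGoingUp l Q
    rw [← hL]
    exact le_iSup (fun p : LTSeries (PrimeSpectrum S) => ((p.length : ℕ∞) : WithBot ℕ∞)) L

/-- Extend a prime of the integral closure not containing `a`. -/
theorem aux_extend {C B : Type} [CommRing C] [CommRing B] [Algebra C B]
    (a : C) (hB : ∀ b : B, ∃ n : ℕ, IsIntegral C (algebraMap C B a ^ n * b))
    (r : Ideal (integralClosure C B)) (hr : r.IsPrime)
    (ha : algebraMap C (integralClosure C B) a ∉ r) :
    ∃ Q : Ideal B, Q.IsPrime ∧ Q.comap (algebraMap (integralClosure C B) B) = r ∧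
      ∀ b ∈ Q, ∃ n : ℕ, ∃ d ∈ r, algebraMap C B a ^ n * b = (d : B) := by
  have hpow : ∀ n, algebraMap C (integralClosure C B) a ^ n ∉ r := fun n h => ha (hr.mem_of_pow_mem n h)
  let Q : Ideal B :=
    { carrier := {b | ∃ n : ℕ, ∃ d ∈ r, algebraMap C B a ^ n * b = (d : B)}
      add_mem' := by
        rintro x y ⟨n, d, hd, e⟩ ⟨m, d', hd', e'⟩
        refine ⟨n + m, algebraMap C (integralClosure C B) a ^ m * d + algebraMap C (integralClosure C B) a ^ n * d',
          r.add_mem (r.mul_mem_left _ hd) (r.mul_mem_left _ hd'), ?_⟩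
        push_cast
        rw [← e, ← e']
        ring
      zero_mem' := ⟨0, 0, r.zero_mem, by simp⟩
      smul_mem' := by
        rintro c x ⟨n, d, hd, e⟩
        obtain ⟨m, hm⟩ := hB c
        refine ⟨n + m, ⟨_, hm⟩ * d, r.mul_mem_left _ hd, ?_⟩
        push_cast
        rw [← e, smul_eq_mul]
        ring }
  have hQ : ∀ b, b ∈ Q ↔ ∃ n : ℕ, ∃ d ∈ r, algebraMap C B a ^ n * b = (d : B) := fun b => Iff.rfl
  have hcom : ∀ (n : ℕ) (d : integralClosure C B), (d : B) ∈ Q → d ∈ r := by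
    rintro n d ⟨m, d', hd', e⟩
    have : algebraMap C (integralClosure C B) a ^ m * d = d' := by
      apply Subtype.ext
      rw [← e]; simp
    exact (hr.mem_or_mem (this ▸ hd' : algebraMap C (integralClosure C B) a ^ m * d ∈ r)).resolve_left (hpow m)
  refine ⟨Q, ?_, ?_, fun b hb => hb⟩
  · refine ⟨?_, ?_⟩
    · rw [Ideal.ne_top_iff_one]
      intro h
      exact hr.ne_top ((Ideal.eq_top_iff_one _).2 (hcom 0 1 (by simpa using h)))
    · intro x y ⟨n, d, hd, e⟩
      obtain ⟨k, hk⟩ := hB x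
      obtain ⟨m, hm⟩ := hB y
      have : (⟨_, hk⟩ : integralClosure C B) * ⟨_, hm⟩ * algebraMap C (integralClosure C B) a ^ n ∈ r := by
        have : (⟨_, hk⟩ : integralClosure C B) * ⟨_, hm⟩ * algebraMap C (integralClosure C B) a ^ n
          = algebraMap C (integralClosure C B) a ^ (k + m) * d := by
          apply Subtype.ext
          push_cast
          rw [← e]
          ring
        rw [this]; exact r.mul_mem_left _ hd
      rcases hr.mem_or_mem ((hr.mem_or_mem this).resolve_right (hpow n)) with h | h
      · exact Or.inl ⟨k, _, h, rfl⟩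
      · exact Or.inr ⟨m, _, h, rfl⟩
  · ext d
    exact ⟨fun h => hcom 0 d h, fun h => ⟨0, d, h, by simp⟩⟩

theorem aux_lying {C B : Type} [CommRing C] [CommRing B] (φ : C →+* B)
    (hφ : Function.Injective φ)
    (a : C) (hB : ∀ b : B, ∃ n : ℕ, φ.IsIntegralElem (φ a ^ n * b))
    (n : Ideal C) (hn : n.IsPrime) (ha : a ∉ n) :
    ∃ Q : Ideal B, Q.IsPrime ∧ Q.comap φ = n := by
  let := φ.toAlgebra
  have : FaithfulSMul C (integralClosure C B) := (faithfulSMul_iff_algebraMap_injective _ _).2 (by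
    intro x y h
    exact hφ (congrArg Subtype.val h))
  obtain ⟨r, hr1, hr2⟩ := Ideal.nonempty_primesOver (S := integralClosure C B) n
  have h2 := hr2.over
  obtain ⟨Q, hQ, hQr, -⟩ := aux_extend (B := B) a hB r hr1 (by
    intro h; apply ha; rw [h2]; exact h)
  refine ⟨Q, hQ, ?_⟩
  rw [h2, ← hQr]
  rfl

theorem aux_down {C B : Type} [CommRing C] [IsDomain C] [IsIntegrallyClosed C]
    [CommRing B] [IsDomain B] (φ : C →+* B)
    (hφ : Function.Injective φ)
    (a : C) (hB : ∀ b : B, ∃ n : ℕ, φ.IsIntegralElem (φ a ^ n * b))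
    (n : Ideal C) (hn : n.IsPrime) (Q : Ideal B) (hQ : Q.IsPrime) (ha : φ a ∉ Q)
    (hnQ : n ≤ Q.comap φ) :
    ∃ Q' : Ideal B, Q' ≤ Q ∧ Q'.IsPrime ∧ Q'.comap φ = n := by
  let := φ.toAlgebra
  have : FaithfulSMul C (integralClosure C B) := (faithfulSMul_iff_algebraMap_injective _ _).2 (by
    intro x y h
    exact hφ (congrArg Subtype.val h))
  let q := Q.comap (algebraMap (integralClosure C B) B)
  have hq : q.IsPrime := Ideal.comap_isPrime _ _
  have : q.LiesOver (Q.comap φ) := ⟨rfl⟩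
  have : (Q.comap φ).IsPrime := Ideal.comap_isPrime _ _
  obtain ⟨r, hrq, hr1, hr2⟩ := Ideal.exists_ideal_le_liesOver_of_le q hnQ
  have h2 := hr2.over
  obtain ⟨Q', hQ', hQr, hm⟩ := aux_extend (B := B) a hB r hr1 (by
    intro h; exact ha (hrq h))
  refine ⟨Q', ?_, hQ', ?_⟩
  · intro b hb
    obtain ⟨k, d, hd, e⟩ := hm b hb
    have : algebraMap C B a ^ k * b ∈ Q := by rw [e]; exact hrq hd
    exact (hQ.mem_or_mem this).resolve_left fun h => ha (hQ.mem_of_pow_mem _ h)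
  · rw [h2, ← hQr]
    rfl

theorem aux_noether {A F B E : Type} [CommRing A] [IsDomain A] [Field F] [Algebra A F]
    [IsFractionRing A F] [CommRing B] [CommRing E] [Nontrivial E] [Algebra A B] [Algebra A E]
    [Algebra F E] [IsScalarTower A F E] [Algebra.FiniteType F E]
    (j : B →ₐ[A] E) (hj : Function.Injective j)
    (hsurj : ∀ z : E, ∃ s : A, s ≠ 0 ∧ ∃ w, s • z = j w) :
    ∃ (n : ℕ) (φ : MvPolynomial (Fin n) A →ₐ[A] B), Function.Injective φ ∧
      ringKrullDim E = n ∧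
      ∀ b : B, ∃ s : A, s ≠ 0 ∧ φ.toRingHom.IsIntegralElem (algebraMap A B s * b) := by
  obtain ⟨n, g, hg, hgi⟩ := exists_integral_inj_algHom_of_fg F E
  choose s hs w hw using fun i => hsurj (g (X i))
  let φ : MvPolynomial (Fin n) A →ₐ[A] B := aeval w
  have hs' : ∀ i, algebraMap A F (s i) ≠ 0 := fun i => by
    simpa using hs i
  -- the scaling automorphism
  let u : MvPolynomial (Fin n) F →ₐ[F] MvPolynomial (Fin n) F :=
    aeval fun i => C (algebraMap A F (s i)) * X i
  let v : MvPolynomial (Fin n) F →ₐ[F] MvPolynomial (Fin n) F :=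
    aeval fun i => C (algebraMap A F (s i))⁻¹ * X i
  have huv : u.comp v = AlgHom.id F _ := by
    ext1 i
    simp only [u, v, AlgHom.comp_apply, aeval_X, map_mul, algHom_C, AlgHom.id_apply,
      algebraMap_eq]
    rw [← mul_assoc, ← C_mul, inv_mul_cancel₀ (hs' i)]; simp
  have hvu : v.comp u = AlgHom.id F _ := by
    ext1 i
    simp only [u, v, AlgHom.comp_apply, aeval_X, map_mul, algHom_C, AlgHom.id_apply,
      algebraMap_eq]
    rw [← mul_assoc, ← C_mul, mul_inv_cancel₀ (hs' i)]; simp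
  have hui : Function.Injective u := Function.LeftInverse.injective
    (g := v) fun x => DFunLike.congr_fun hvu x
  have hus : Function.Surjective u := fun x => ⟨v x, DFunLike.congr_fun huv x⟩
  let ψ : MvPolynomial (Fin n) F →ₐ[F] E := g.comp u
  have hψi : Function.Injective ψ := hg.comp hui
  have hψ : ψ.toRingHom.IsIntegral :=
    RingHom.IsIntegral.trans u.toRingHom g.toRingHom (RingHom.isIntegral_of_surjective _ hus) hgi
  have hcomm : ∀ x, j (φ x) = ψ (map (algebraMap A F) x) := by
    intro x
    have : (j : B →+* E).comp (φ : MvPolynomial (Fin n) A →+* B)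
        = (ψ : MvPolynomial (Fin n) F →+* E).comp (map (algebraMap A F)) := by
      apply MvPolynomial.ringHom_ext
      · intro c
        simp [φ, ψ, u, algHom_C, ← IsScalarTower.algebraMap_apply]
      · intro i
        simp [φ, ψ, u, ← hw, algHom_C, ← IsScalarTower.algebraMap_apply, Algebra.smul_def]
    exact DFunLike.congr_fun this x
  refine ⟨n, φ, ?_, ?_, ?_⟩
  · have : Function.Injective (fun x => j (φ x)) := by
      simp_rw [hcomm]
      exact hψi.comp (map_injective _ (IsFractionRing.injective A F))
    exact this.of_comp
  · rw [aux_dim g.toRingHom hg hgi]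
    simp
  · intro b
    let a0 := MvPolynomial.algebraMvPolynomial (σ := Fin n) (R := A) (S := F)
    let a1 : Algebra (MvPolynomial (Fin n) F) E := ψ.toRingHom.toAlgebra
    let a2 : Algebra (MvPolynomial (Fin n) A) E :=
      (ψ.toRingHom.comp (map (algebraMap A F))).toAlgebra
    have : IsScalarTower (MvPolynomial (Fin n) A) (MvPolynomial (Fin n) F) E :=
      IsScalarTower.of_algebraMap_eq fun x => rfl
    let a3 : Algebra (MvPolynomial (Fin n) A) B := φ.toRingHom.toAlgebra
    let j' : B →ₐ[MvPolynomial (Fin n) A] E := { j with commutes' := hcomm }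
    obtain ⟨⟨_, m, hm, rfl⟩, hint⟩ := IsIntegral.exists_multiple_integral_of_isLocalization
      (Rₘ := MvPolynomial (Fin n) F)
      ((nonZeroDivisors A).map (C (σ := Fin n))) (j b) (hψ (j b))
    refine ⟨m, nonZeroDivisors.ne_zero hm, ?_⟩
    have : IsIntegral (MvPolynomial (Fin n) A) (algebraMap A B m * b) := by
      rw [← isIntegral_algHom_iff j' hj]
      convert hint using 1
      rw [Submonoid.smul_def, Algebra.smul_def]
      change j _ = ψ (map _ (C m)) * j b
      rw [← hcomm, map_mul]
      simp [φ]
    exact this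

theorem aux_ext (K : Type) [Field K] (r s : ℕ) :
    ∃ e : MvPolynomial (Fin r ⊕ Fin s) K ≃+* MvPolynomial (Fin s) (MvPolynomial (Fin r) K),
      (∀ x, extHom K r s x =
        MvPolynomial.map (algebraMap (MvPolynomial (Fin r) K) (RatFuncField K (Fin r))) (e x)) ∧
      ∀ m, e (rename Sum.inl m) = C m := by
  let e := (renameEquiv K (Equiv.sumComm (Fin r) (Fin s))).trans (sumAlgEquiv K (Fin s) (Fin r))
  refine ⟨e.toRingEquiv, ?_, ?_⟩
  · intro x
    have : extHom K r s =
        (MvPolynomial.map (algebraMap (MvPolynomial (Fin r) K) (RatFuncField K (Fin r)))).comp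
          (e : _ →+* _) := by
      apply MvPolynomial.ringHom_ext
      · intro c
        simp [extHom, e]
      · rintro (i | i) <;> simp [extHom, e]
    exact DFunLike.congr_fun this x
  · intro m
    have : (e : _ →+* _).comp (rename (R := K) (Sum.inl : Fin r → Fin r ⊕ Fin s)).toRingHom =
        (C : MvPolynomial (Fin r) K →+* MvPolynomial (Fin s) (MvPolynomial (Fin r) K)) := by
      apply MvPolynomial.ringHom_ext
      · intro c
        simp [e]
      · intro i
        simp [e]
    exact DFunLike.congr_fun this m

theorem aux_loc_s18 (K : Type) [Field K] (r s : ℕ) (p : Ideal (MvPolynomial (Fin r ⊕ Fin s) K))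
    (hp : p.IsPrime) (hcap : ∀ g : MvPolynomial (Fin r) K, rename Sum.inl g ∈ p → g = 0) :
    (∀ x, extHom K r s x ∈ p.map (extHom K r s) → x ∈ p) ∧
    ∀ z, ∃ m : MvPolynomial (Fin r) K, m ≠ 0 ∧ ∃ w, z * C (algebraMap _ _ m) = extHom K r s w := by
  obtain ⟨e, he, hem⟩ := aux_ext K r s
  let a0 := MvPolynomial.algebraMvPolynomial (σ := Fin s) (R := MvPolynomial (Fin r) K)
    (S := RatFuncField K (Fin r))
  have hl : IsLocalization ((nonZeroDivisors (MvPolynomial (Fin r) K)).map (C (σ := Fin s)))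
    (MvPolynomial (Fin s) (RatFuncField K (Fin r))) := MvPolynomial.isLocalization _ _
  constructor
  · intro x hx
    have hp' : (p.map (e : _ →+* MvPolynomial (Fin s) (MvPolynomial (Fin r) K))).IsPrime :=
      Ideal.map_isPrime_of_equiv e
    have hmem : ∀ y, e y ∈ p.map (e : _ →+* MvPolynomial (Fin s) (MvPolynomial (Fin r) K)) →
        y ∈ p := by
      intro y hy
      obtain ⟨y', hy', h⟩ := (Ideal.mem_map_of_equiv e _).1 hy
      rwa [← e.injective h]
    have h := IsLocalization.under_map_of_isPrime_disjoint
      ((nonZeroDivisors (MvPolynomial (Fin r) K)).map (C (σ := Fin s)))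
      (MvPolynomial (Fin s) (RatFuncField K (Fin r))) hp' (by
        rw [Set.disjoint_left]
        rintro _ ⟨m, hm, rfl⟩ h
        rw [← hem] at h
        exact nonZeroDivisors.ne_zero hm (hcap m (hmem _ h)))
    apply hmem
    rw [← h]
    have hc : (algebraMap (MvPolynomial (Fin s) (MvPolynomial (Fin r) K))
        (MvPolynomial (Fin s) (RatFuncField K (Fin r)))).comp
        (e : _ →+* MvPolynomial (Fin s) (MvPolynomial (Fin r) K)) = extHom K r s :=
      RingHom.ext fun y => (he y).symm
    rw [Ideal.under_def, Ideal.mem_comap, Ideal.map_map, hc]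
    have hx' : (algebraMap (MvPolynomial (Fin s) (MvPolynomial (Fin r) K))
        (MvPolynomial (Fin s) (RatFuncField K (Fin r)))) (e x) = extHom K r s x := (he x).symm
    rw [hx']
    exact hx
  · intro z
    obtain ⟨⟨g, _, m, hm, rfl⟩, h⟩ := IsLocalization.surj
      ((nonZeroDivisors (MvPolynomial (Fin r) K)).map (C (σ := Fin s))) z
    refine ⟨m, nonZeroDivisors.ne_zero hm, e.symm g, ?_⟩
    rw [he, e.apply_symm_apply]
    have h' : z * MvPolynomial.map _ (C m) = MvPolynomial.map _ g := h
    rw [map_C] at h'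
    exact h'

theorem aux_ker (K : Type) [Field K] {r s : ℕ} (t : Fin r → K)
    (I : Ideal (MvPolynomial (Fin r ⊕ Fin s) K)) (h : ∀ i, X (Sum.inl i) - C (t i) ∈ I) :
    RingHom.ker (specHom K (s := s) t) ≤ I := by
  have key : ∀ f, Ideal.Quotient.mk I (rename Sum.inr (specHom K t f)) = Ideal.Quotient.mk I f := by
    intro f
    have : ((Ideal.Quotient.mk I).comp
        (rename (R := K) (Sum.inr : Fin s → Fin r ⊕ Fin s)).toRingHom).comp (specHom K t) =
        Ideal.Quotient.mk I := by
      apply MvPolynomial.ringHom_ext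
      · intro c
        simp [specHom]
      · rintro (i | i)
        · simp [specHom]
          exact (Ideal.Quotient.eq.2 (h i)).symm
        · simp [specHom]
    exact DFunLike.congr_fun this f
  intro f hf
  rw [← Ideal.Quotient.eq_zero_iff_mem, ← key, (RingHom.mem_ker).1 hf]
  simp

theorem aux_surj (K : Type) [Field K] {r s : ℕ} (t : Fin r → K) :
    Function.Surjective (specHom K (s := s) t) := by
  intro f
  refine ⟨rename Sum.inr f, ?_⟩
  have : (specHom K t).comp
        (rename (R := K) (Sum.inr : Fin s → Fin r ⊕ Fin s)).toRingHom = RingHom.id _ := by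
      apply MvPolynomial.ringHom_ext
      · intro c
        simp [specHom]
      · intro i
        simp [specHom]
  exact DFunLike.congr_fun this f

theorem aux_spec_inl (K : Type) [Field K] {r s : ℕ} (t : Fin r → K) (m : MvPolynomial (Fin r) K) :
    specHom K (s := s) t (rename Sum.inl m) = C (eval t m) := by
  have : (specHom K (s := s) t).comp
        (rename (R := K) (Sum.inl : Fin r → Fin r ⊕ Fin s)).toRingHom = C.comp (eval t) := by
      apply MvPolynomial.ringHom_ext
      · intro c
        simp [specHom]
      · intro i
        simp [specHom]
  exact DFunLike.congr_fun this m

/-- Relative Noether normalization. -/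
theorem aux_main (K : Type) [Field K] (r s : ℕ) (p : Ideal (MvPolynomial (Fin r ⊕ Fin s) K))
    (hp : p.IsPrime) (hcap : ∀ g : MvPolynomial (Fin r) K, rename Sum.inl g ∈ p → g = 0) :
    ∃ (n : ℕ) (Φ : MvPolynomial (Fin n) (MvPolynomial (Fin r) K) →+*
        MvPolynomial (Fin r ⊕ Fin s) K) (a : MvPolynomial (Fin r) K), a ≠ 0 ∧
      ringKrullDim (MvPolynomial (Fin s) (RatFuncField K (Fin r)) ⧸ p.map (extHom K r s)) = n ∧
      (∀ c, Φ (C c) = rename Sum.inl c) ∧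
      Function.Injective ((Ideal.Quotient.mk p).comp Φ) ∧
      ∀ b, ∃ k : ℕ, ((Ideal.Quotient.mk p).comp Φ).IsIntegralElem
        (((Ideal.Quotient.mk p).comp Φ) (C a) ^ k * b) := by
  obtain ⟨h1, h2⟩ := aux_loc_s18 K r s p hp hcap
  let B := MvPolynomial (Fin r ⊕ Fin s) K ⧸ p
  let E := MvPolynomial (Fin s) (RatFuncField K (Fin r)) ⧸ p.map (extHom K r s)
  let i1 : Algebra (MvPolynomial (Fin r) K) B :=
    ((Ideal.Quotient.mk p).comp (rename Sum.inl).toRingHom).toAlgebra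
  have hE : Nontrivial E := Ideal.Quotient.nontrivial_iff.2 (by
    intro h
    apply hp.ne_top
    rw [Ideal.eq_top_iff_one]
    apply h1
    rw [h]; trivial)
  have hft : Algebra.FiniteType (RatFuncField K (Fin r)) E := inferInstance
  have hcomm : ∀ c : MvPolynomial (Fin r) K,
      Ideal.quotientMap (p.map (extHom K r s)) (extHom K r s) Ideal.le_comap_map
        (algebraMap (MvPolynomial (Fin r) K) B c) = algebraMap (MvPolynomial (Fin r) K) E c := by
    intro c
    obtain ⟨e, he, hem⟩ := aux_ext K r s
    change Ideal.Quotient.mk _ (extHom K r s (rename Sum.inl c)) = _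
    rw [he, hem, map_C]
    rfl
  let j : B →ₐ[MvPolynomial (Fin r) K] E :=
    { Ideal.quotientMap (p.map (extHom K r s)) (extHom K r s) Ideal.le_comap_map with
      commutes' := hcomm }
  have hj : Function.Injective j := by
    refine Ideal.quotientMap_injective' (H := Ideal.le_comap_map) ?_
    intro x hx
    exact h1 x hx
  obtain ⟨n, φ, hφ, hdim, hint⟩ := aux_noether (A := MvPolynomial (Fin r) K)
    (F := RatFuncField K (Fin r)) (B := B) (E := E) j hj (by
      intro z
      obtain ⟨z, rfl⟩ := Ideal.Quotient.mk_surjective z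
      obtain ⟨m, hm, w, hw⟩ := h2 z
      refine ⟨m, hm, Ideal.Quotient.mk p w, ?_⟩
      change _ = Ideal.Quotient.mk _ (extHom K r s w)
      rw [← hw, Algebra.smul_def, mul_comm z, map_mul]
      rfl)
  choose W hW using fun i => Ideal.Quotient.mk_surjective (I := p) (φ (X i))
  let Φ : MvPolynomial (Fin n) (MvPolynomial (Fin r) K) →+* MvPolynomial (Fin r ⊕ Fin s) K :=
    eval₂Hom (rename Sum.inl).toRingHom W
  have hΦC : ∀ c, Φ (C c) = rename Sum.inl c := fun c => by simp [Φ]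
  have hΦ : (Ideal.Quotient.mk p).comp Φ = φ.toRingHom := by
    apply MvPolynomial.ringHom_ext
    · intro c
      change Ideal.Quotient.mk p (Φ (C c)) = φ (C c)
      rw [hΦC]
      exact (φ.commutes c).symm
    · intro i
      change Ideal.Quotient.mk p (Φ (X i)) = φ (X i)
      rw [← hW]
      simp [Φ]
  choose a ha haint using fun i => hint (Ideal.Quotient.mk p (X (Sum.inr i)))
  rw [← hΦ] at haint
  refine ⟨n, Φ, ∏ i, a i, Finset.prod_ne_zero_iff.2 fun i _ => ha i, hdim, hΦC, ?_, ?_⟩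
  · rw [hΦ]; exact hφ
  set θ := (Ideal.Quotient.mk p).comp Φ with hθ
  have hθC : ∀ c, θ (C c) = Ideal.Quotient.mk p (rename Sum.inl c) := fun c => by
    simp [θ, hΦC]
  have hθi : ∀ c, θ.IsIntegralElem (θ c) := fun c => θ.isIntegralElem_map
  intro b
  obtain ⟨b, rfl⟩ := Ideal.Quotient.mk_surjective b
  induction b using MvPolynomial.induction_on with
  | C c =>
    refine ⟨0, ?_⟩
    have : Ideal.Quotient.mk p (C c) = θ (C (C c)) := by rw [hθC]; simp
    rw [pow_zero, one_mul, this]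
    exact hθi _
  | add x y hx hy =>
    obtain ⟨k, hk⟩ := hx
    obtain ⟨m, hm⟩ := hy
    refine ⟨k + m, ?_⟩
    have h := ((hθi (C (∏ i, a i) ^ m)).mul θ hk).add θ ((hθi (C (∏ i, a i) ^ k)).mul θ hm)
    have e0 : θ (C (∏ i, a i)) ^ (k + m) * Ideal.Quotient.mk p (x + y) =
        θ (C (∏ i, a i) ^ m) * (θ (C (∏ i, a i)) ^ k * Ideal.Quotient.mk p x) +
        θ (C (∏ i, a i) ^ k) * (θ (C (∏ i, a i)) ^ m * Ideal.Quotient.mk p y) := by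
      simp only [map_add, map_pow]
      ring
    rw [e0]
    exact h
  | mul_X x i hx =>
    obtain ⟨k, hk⟩ := hx
    rcases i with i | i
    · refine ⟨k, ?_⟩
      have h := hk.mul θ (hθi (C (X i)))
      rw [hθC (X i), rename_X, mul_assoc, ← map_mul] at h
      exact h
    · refine ⟨k + 1, ?_⟩
      have h := (hk.mul θ (haint i)).mul θ (hθi (C (∏ j ∈ Finset.univ.erase i, a j)))
      have e1 : θ (C (∏ i, a i)) = algebraMap (MvPolynomial (Fin r) K) B (a i) *
          θ (C (∏ j ∈ Finset.univ.erase i, a j)) := by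
        rw [← Finset.mul_prod_erase _ _ (Finset.mem_univ i), C_mul, map_mul, hθC (a i)]
        rfl
      have e0 : θ (C (∏ i, a i)) ^ (k + 1) * Ideal.Quotient.mk p (x * X (Sum.inr i)) =
          θ (C (∏ i, a i)) ^ k * Ideal.Quotient.mk p x *
          (algebraMap (MvPolynomial (Fin r) K) B (a i) * Ideal.Quotient.mk p (X (Sum.inr i))) *
          θ (C (∏ j ∈ Finset.univ.erase i, a j)) := by
        rw [pow_succ, map_mul]
        generalize θ (C (∏ i, a i)) ^ k = u
        rw [e1]
        ring
      rw [e0]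
      rw [← Algebra.smul_def]
      exact h

/-- (Equidimensionality of the specialized variety, via generic
flatness.) For `p_T = ⟨P_1,…,P_l⟩ ⊆ K[T,Y]` prime with `p_T ∩ K[T] = 0` and
`d = dim K(T)[Y]/p̃_T`, there is a nonzero `h ∈ K[T]` such that for all `t ∈ K^r` with
`h(t) ≠ 0`, the specialized ideal `p_t ⊆ K[Y]` is proper and every minimal prime `q` over
`p_t` satisfies `dim K[Y]/q = d`. -/
theorem stmt_18 (K : Type) [Field K] (r s l : ℕ)
    (P : Fin l → MvPolynomial (Fin r ⊕ Fin s) K)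
    (hprime : (Ideal.span (Set.range P)).IsPrime)
    (hcap : ∀ g : MvPolynomial (Fin r) K,
      MvPolynomial.rename Sum.inl g ∈ Ideal.span (Set.range P) → g = 0)
    (d : WithBot ℕ∞)
    (hd : ringKrullDim (MvPolynomial (Fin s) (RatFuncField K (Fin r)) ⧸
        Ideal.span (Set.range fun i => extHom K r s (P i))) = d) :
    ∃ h : MvPolynomial (Fin r) K, h ≠ 0 ∧
      ∀ t : Fin r → K, MvPolynomial.eval t h ≠ 0 →
        Ideal.span (Set.range fun i => specHom K t (P i)) ≠ ⊤ ∧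
        ∀ q ∈ (Ideal.span (Set.range fun i => specHom K t (P i))).minimalPrimes,
          ringKrullDim (MvPolynomial (Fin s) K ⧸ q) = d := by
  set p := Ideal.span (Set.range P) with hpdef
  have hE : Ideal.span (Set.range fun i => extHom K r s (P i)) = p.map (extHom K r s) := by
    rw [hpdef, Ideal.map_span, ← Set.range_comp]; rfl
  have hS : ∀ t : Fin r → K, Ideal.span (Set.range fun i => specHom K t (P i)) =
      p.map (specHom K (s := s) t) := by
    intro t
    rw [hpdef, Ideal.map_span, ← Set.range_comp]; rfl
  obtain ⟨n, Φ, a, ha0, hdim, hΦC, hinj, hint⟩ := aux_main K r s p hprime hcap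
  rw [hE, hdim] at hd
  subst hd
  refine ⟨a, ha0, fun t hat => ?_⟩
  rw [hS t]
  -- specialization on the base of the normalization
  let σ : MvPolynomial (Fin n) (MvPolynomial (Fin r) K) →+* MvPolynomial (Fin n) K :=
    MvPolynomial.map (eval t)
  let τ : MvPolynomial (Fin n) K →+* MvPolynomial (Fin s) K :=
    eval₂Hom C fun i => specHom K t (Φ (X i))
  have hsq : ∀ x, specHom K t (Φ x) = τ (σ x) := by
    intro x
    have : (specHom K (s := s) t).comp Φ = τ.comp σ := by
      apply MvPolynomial.ringHom_ext
      · intro c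
        simp [σ, τ, hΦC, aux_spec_inl]
      · intro i
        simp [σ, τ]
    exact DFunLike.congr_fun this x
  have hσs : ∀ f : MvPolynomial (Fin n) K, σ (MvPolynomial.map C f) = f := by
    intro f
    simp only [σ, MvPolynomial.map_map]
    have : (eval t).comp (C : K →+* MvPolynomial (Fin r) K) = RingHom.id K := by
      ext c; simp
    rw [this, MvPolynomial.map_id]
  have hnp : (RingHom.ker σ).IsPrime := RingHom.ker_isPrime σ
  have han : C a ∉ RingHom.ker σ := by
    simpa [RingHom.mem_ker, σ] using hat
  have hspecker : ∀ Q : Ideal (MvPolynomial (Fin r ⊕ Fin s) K ⧸ p),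
      Q.comap ((Ideal.Quotient.mk p).comp Φ) = RingHom.ker σ →
      RingHom.ker (specHom K (s := s) t) ≤ Q.comap (Ideal.Quotient.mk p) := by
    intro Q hQ
    apply aux_ker
    intro i
    have h : C (X i - C (t i)) ∈ Q.comap ((Ideal.Quotient.mk p).comp Φ) := by
      rw [hQ, RingHom.mem_ker]
      simp [σ]
    have h' : Ideal.Quotient.mk p (Φ (C (X i - C (t i)))) ∈ Q := h
    rw [hΦC] at h'
    simpa using h'
  have hple : ∀ Q : Ideal (MvPolynomial (Fin r ⊕ Fin s) K ⧸ p),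
      p ≤ Q.comap (Ideal.Quotient.mk p) := by
    intro Q x hx
    rw [Ideal.mem_comap, Ideal.Quotient.eq_zero_iff_mem.2 hx]
    exact Q.zero_mem
  have hsurj := aux_surj K (s := s) t
  constructor
  · obtain ⟨Q, hQ, hQn⟩ := aux_lying _ hinj (C a) hint _ hnp han
    intro htop
    have h1 := Ideal.map_isPrime_of_surjective hsurj (hspecker Q hQn)
    apply h1.ne_top
    rw [eq_top_iff, ← htop]
    exact Ideal.map_mono (hple Q)
  · intro q hq
    have hqp : q.IsPrime := hq.1.1
    have hpq : p.map (specHom K (s := s) t) ≤ q := hq.1.2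
    have hQp : (q.comap (specHom K (s := s) t)).IsPrime := Ideal.comap_isPrime _ _
    have hpQ : p ≤ q.comap (specHom K (s := s) t) := Ideal.map_le_iff_le_comap.1 hpq
    have hker : RingHom.ker (Ideal.Quotient.mk p) ≤ q.comap (specHom K (s := s) t) := by
      rwa [Ideal.mk_ker]
    have hQB := Ideal.map_isPrime_of_surjective Ideal.Quotient.mk_surjective hker
    have hQBc : ((q.comap (specHom K (s := s) t)).map (Ideal.Quotient.mk p)).comap
        (Ideal.Quotient.mk p) = q.comap (specHom K (s := s) t) := by
      rw [Ideal.comap_map_of_surjective' _ Ideal.Quotient.mk_surjective, sup_eq_left]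
      exact hker
    have hmem : ∀ x, Ideal.Quotient.mk p x ∈
        (q.comap (specHom K (s := s) t)).map (Ideal.Quotient.mk p) ↔ specHom K t x ∈ q := by
      intro x
      rw [← Ideal.mem_comap, hQBc, Ideal.mem_comap]
    obtain ⟨Q', hQ'le, hQ'p, hQ'n⟩ := aux_down _ hinj (C a) hint _ hnp _ hQB (by
        rw [RingHom.comp_apply, hmem, hΦC, aux_spec_inl]
        intro h
        exact hqp.ne_top (Ideal.eq_top_of_isUnit_mem _ h ((isUnit_iff_ne_zero.2 hat).map C)))
      (by
        intro x hx
        rw [Ideal.mem_comap, RingHom.comp_apply, hmem, hsq, (RingHom.mem_ker).1 hx, map_zero]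
        exact q.zero_mem)
    have hq' := Ideal.map_isPrime_of_surjective hsurj (hspecker Q' hQ'n)
    have hle1 : (Q'.comap (Ideal.Quotient.mk p)).map (specHom K (s := s) t) ≤ q := by
      rw [Ideal.map_le_iff_le_comap, ← hQBc]
      exact Ideal.comap_mono hQ'le
    have hle2 := hq.2 ⟨hq', Ideal.map_mono (hple Q')⟩ hle1
    have hle3 : q.comap (specHom K (s := s) t) ≤ Q'.comap (Ideal.Quotient.mk p) := by
      refine (Ideal.comap_mono hle2).trans ?_
      rw [Ideal.comap_map_of_surjective' _ hsurj]
      exact sup_le le_rfl (hspecker Q' hQ'n)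
    let ρ : MvPolynomial (Fin n) K →+* MvPolynomial (Fin s) K ⧸ q := (Ideal.Quotient.mk q).comp τ
    have hρinj : Function.Injective ρ := by
      rw [injective_iff_map_eq_zero]
      intro f hf
      have h1 : τ f ∈ q := Ideal.Quotient.eq_zero_iff_mem.1 hf
      rw [← hσs f, ← hsq] at h1
      have h2 : MvPolynomial.map C f ∈ Q'.comap ((Ideal.Quotient.mk p).comp Φ) := hle3 h1
      rw [hQ'n, RingHom.mem_ker, hσs] at h2
      exact h2
    -- the quotient map `B → K[Y]/q`
    let π : MvPolynomial (Fin r ⊕ Fin s) K ⧸ p →+* MvPolynomial (Fin s) K ⧸ q :=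
      Ideal.quotientMap q (specHom K t) hpQ
    have hπ : ∀ x, π (Ideal.Quotient.mk p x) = Ideal.Quotient.mk q (specHom K t x) :=
      fun x => rfl
    have hπθ : π.comp ((Ideal.Quotient.mk p).comp Φ) = ρ.comp σ := by
      refine RingHom.ext fun x => ?_
      simp only [RingHom.comp_apply, hπ, hsq, ρ]
    have hρint : ρ.IsIntegral := by
      intro y
      obtain ⟨y, rfl⟩ := Ideal.Quotient.mk_surjective y
      obtain ⟨x, rfl⟩ := hsurj y
      obtain ⟨k, g, hg, hgx⟩ := hint (Ideal.Quotient.mk p x)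
      have h1 : ρ.IsIntegralElem (π (((Ideal.Quotient.mk p).comp Φ) (C a) ^ k *
          Ideal.Quotient.mk p x)) := by
        refine ⟨g.map σ, hg.map σ, ?_⟩
        rw [Polynomial.eval₂_map, ← hπθ, ← Polynomial.hom_eval₂, hgx, map_zero]
      have h2 := (ρ.isIntegralElem_map (x := C ((eval t a)⁻¹ ^ k))).mul ρ h1
      have h3 : π (((Ideal.Quotient.mk p).comp Φ) (C a) ^ k * Ideal.Quotient.mk p x) =
          Ideal.Quotient.mk q (C (eval t a)) ^ k * Ideal.Quotient.mk q (specHom K t x) := by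
        rw [map_mul, map_pow π, RingHom.comp_apply, hπ, hπ, hΦC, aux_spec_inl]
      rw [h3, ← mul_assoc] at h2
      have : ρ (C ((eval t a)⁻¹ ^ k)) * Ideal.Quotient.mk q (C (eval t a)) ^ k = 1 := by
        simp only [ρ, RingHom.comp_apply, τ, coe_eval₂Hom, eval₂_C]
        rw [← map_pow, ← map_mul, ← map_pow, ← map_mul, ← mul_pow, inv_mul_cancel₀ hat]
        simp
      rw [this, one_mul] at h2
      exact h2
    rw [aux_dim ρ hρinj hρint]
    simp

end
end
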